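/- Let a be a ribbon and let f be any extension of a. Then the set of connected components of the critical set of f in the open unit disk has cardinality at least γ(a). -/

import Mathlib

open scoped RealInnerProductSpace

noncomputable section

abbrev E2 : Type := EuclideanSpace ℝ (Fin 2)

/-- The point (cos t, sin t) on the unit circle in ℝ². -/
def sphPt (t : ℝ) : E2 := (EuclideanSpace.equiv (Fin 2) ℝ).symm ![Real.cos t, Real.sin t]

/-- A ribbon with `n` nodes, encoded via the angle parametrization `g = φ ∘ (cos, sin)`
of a C^∞ function `φ : S¹ → ℝ` whose critical points on the circle are exactly the `n`
nondegenerate local extrema (nodes) at angles `θ 0 < θ 1 < ⋯ < θ (n-1)` in `[0, 2π)`,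
with pairwise distinct critical values, together with a marking `ν` of the nodes by `±1`. -/
structure Ribbon (n : ℕ) : Type where
  g : ℝ → ℝ
  θ : Fin n → ℝ
  ν : Fin n → ℤ
  n_even : Even n
  n_pos : 0 < n
  smooth_g : ContDiff ℝ (⊤ : ℕ∞) g
  periodic_g : Function.Periodic g (2 * Real.pi)
  theta_mem : ∀ i, θ i ∈ Set.Ico (0 : ℝ) (2 * Real.pi)
  theta_mono : StrictMono θ
  node_crit : ∀ i, deriv g (θ i) = 0
  node_nondeg : ∀ i, deriv (deriv g) (θ i) ≠ 0
  crit_only : ∀ t ∈ Set.Ico (0 : ℝ) (2 * Real.pi), deriv g t = 0 → ∃ i, t = θ i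
  values_distinct : ∀ i j, g (θ i) = g (θ j) → i = j
  nu_sign : ∀ i, ν i = 1 ∨ ν i = -1

/-- The signature σ = s₊ − s₋ of a ribbon. -/
def Ribbon.sigma {n : ℕ} (a : Ribbon n) : ℤ := ∑ i, a.ν i

/-- Critical points of `f` in the open unit disk. -/
def critPts (f : E2 → ℝ) : Set E2 :=
  {x | x ∈ Metric.ball (0 : E2) 1 ∧ fderiv ℝ f x = 0}

/-- `f : ℝ² → ℝ` is an extension of the ribbon `a`: it is C^∞, agrees with `φ` on the unit
circle, has nowhere-vanishing gradient on the circle, and at each node the radial derivative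
`⟪∇f(p), p⟫` has sign `ν p` if `p` is a local maximum of `φ` (second derivative of `g`
negative there) and sign `−ν p` if `p` is a local minimum of `φ`. -/
def IsExtension {n : ℕ} (a : Ribbon n) (f : E2 → ℝ) : Prop :=
  ContDiff ℝ (⊤ : ℕ∞) f ∧
  (∀ t : ℝ, f (sphPt t) = a.g t) ∧
  (∀ x ∈ Metric.sphere (0 : E2) 1, fderiv ℝ f x ≠ 0) ∧
  (∀ i : Fin n,
    (deriv (deriv a.g) (a.θ i) < 0 →
      0 < (a.ν i : ℝ) * ⟪gradient f (sphPt (a.θ i)), sphPt (a.θ i)⟫) ∧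
    (0 < deriv (deriv a.g) (a.θ i) →
      (a.ν i : ℝ) * ⟪gradient f (sphPt (a.θ i)), sphPt (a.θ i)⟫ < 0))

/-- The ribbon invariant γ: the infimum, over all extensions `f` of `a`, of the number of
critical points of `f` in the open unit disk (a value in `ℕ∞`). -/
def gammaR {n : ℕ} (a : Ribbon n) : ℕ∞ :=
  sInf {k : ℕ∞ | ∃ f : E2 → ℝ, IsExtension a f ∧ (critPts f).encard = k}

section
open Set Metric Filter Topology
open scoped NNReal ENNReal

lemma A_mv {V : Type*} [NormedAddCommGroup V] [NormedSpace ℝ V] {g : ℂ → V} {x y : ℂ} {M : ℝ}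
    (hg : Differentiable ℝ g)
    (h : ∀ z ∈ closedBall x ‖y - x‖, ‖fderiv ℝ g z‖ ≤ M) :
    ‖g y - g x‖ ≤ M * ‖y - x‖ := by
  apply (convex_closedBall x ‖y - x‖).norm_image_sub_le_of_norm_fderiv_le (fun z _ => hg z) h
  · simp
  · simp [dist_eq_norm]

lemma A_curve {g : ℂ → ℝ} {x₀ : ℂ} (hg : HasStrictFDerivAt g (fderiv ℝ g x₀) x₀)
    (h0 : fderiv ℝ g x₀ ≠ 0) : ∃ t ∈ 𝓝 x₀, dimH (t ∩ {x | g x = 0}) ≤ 1 := by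
  set L := fderiv ℝ g x₀ with hL
  set w : ℂ := ⟨L 1, L Complex.I⟩ with hw
  have hLv : ∀ v : ℂ, L v = v.re * L 1 + v.im * L Complex.I := by
    intro v
    conv_lhs => rw [← Complex.re_add_im v]
    have h1 : ((v.re : ℂ) + v.im * Complex.I) = v.re • (1:ℂ) + v.im • Complex.I := by simp
    rw [h1, map_add, map_smul, map_smul]; simp
  have hw0 : w ≠ 0 := by
    intro h
    apply h0
    have h1 : L 1 = 0 := by simpa [hw] using congrArg Complex.re h
    have h2 : L Complex.I = 0 := by simpa [hw] using congrArg Complex.im h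
    ext v; rw [hLv v, h1, h2]; simp
  set l : ℂ →L[ℝ] ℝ := Complex.imCLM.comp (ContinuousLinearMap.mul ℝ ℂ ((starRingEnd ℂ) w)) with hl
  have hlv : ∀ v : ℂ, ‖w‖ * ‖v‖ ≤ |L v| + |l v| := by
    intro v
    have h1 : ‖w‖ * ‖v‖ = ‖(starRingEnd ℂ) w * v‖ := by simp
    rw [h1]
    refine (Complex.norm_le_abs_re_add_abs_im _).trans (le_of_eq ?_)
    congr 2
    rw [hLv]; simp [hw]; ring
  have hwp : 0 < ‖w‖ := norm_pos_iff.2 hw0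
  have := hg.isLittleO.def (half_pos hwp)
  rw [nhds_prod_eq] at this
  have this := (eventually_prod_self_iff (r := fun x y => ‖g x - g y - L (x - y)‖ ≤ ‖w‖ / 2 * ‖x - y‖)).1 this
  obtain ⟨t, ht, hxy⟩ := this
  refine ⟨t, ht, ?_⟩
  set S := t ∩ {x | g x = 0} with hS
  have key : ∀ x ∈ S, ∀ y ∈ S, ‖x - y‖ ≤ 2 / ‖w‖ * |l x - l y| := by
    intro x hx y hy
    have h1 := hxy x hx.1 y hy.1
    have hgx : g x = 0 := hx.2
    have hgy : g y = 0 := hy.2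
    simp only [hgx, hgy, sub_zero, zero_sub, norm_neg, Real.norm_eq_abs] at h1
    have h2 := hlv (x - y)
    rw [map_sub l] at h2
    rw [div_mul_eq_mul_div, le_div_iff₀ hwp]
    nlinarith
  let inv := Function.invFunOn l S
  have hinv : ∀ x ∈ S, inv (l x) = x := by
    intro x hx
    have h1 : inv (l x) ∈ S := Function.invFunOn_mem ⟨x, hx, rfl⟩
    have h2 : l (inv (l x)) = l x := Function.invFunOn_eq (s := S) (f := l) ⟨x, hx, rfl⟩
    have := key _ h1 _ hx
    rw [h2] at this
    simpa [sub_eq_zero] using this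
  have hlip : LipschitzOnWith ⟨2 / ‖w‖, by positivity⟩ inv (l '' S) := by
    apply LipschitzOnWith.of_dist_le_mul
    rintro _ ⟨x, hx, rfl⟩ _ ⟨y, hy, rfl⟩
    rw [hinv x hx, hinv y hy, dist_eq_norm, Real.dist_eq]
    exact key x hx y hy
  calc dimH S ≤ dimH (inv '' (l '' S)) := dimH_mono fun x hx => ⟨l x, ⟨x, hx, rfl⟩, hinv x hx⟩
    _ ≤ dimH (l '' S) := hlip.dimH_image_le
    _ ≤ dimH (univ : Set ℝ) := dimH_mono (subset_univ _)
    _ = 1 := Real.dimH_univ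

theorem sard_const {F : ℂ → ℝ} (hF : ContDiff ℝ (⊤ : ℕ∞) F) {K : Set ℂ} (hK : IsPreconnected K)
    (hc : ∀ x ∈ K, fderiv ℝ F x = 0) : ∀ x ∈ K, ∀ y ∈ K, F x = F y := by
  have hF1 : ContDiff ℝ (⊤ : ℕ∞) (fderiv ℝ F) := hF.fderiv_right (by simp)
  have hF2 : ContDiff ℝ (⊤ : ℕ∞) (fderiv ℝ (fderiv ℝ F)) := hF1.fderiv_right (by simp)
  have dF := hF.differentiable (by simp)
  have dF1 := hF1.differentiable (by simp)
  set Z1 := {x | fderiv ℝ F x = 0 ∧ fderiv ℝ (fderiv ℝ F) x = 0} with hZ1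
  set Z2 := {x | fderiv ℝ F x = 0 ∧ fderiv ℝ (fderiv ℝ F) x ≠ 0} with hZ2
  have hnear : ∀ x₀ : ℂ, ∀ u ∈ 𝓝 x₀, ∃ t ∈ 𝓝 x₀, t ⊆ u ∧ ∀ x ∈ t, ∀ y ∈ t, closedBall x ‖y - x‖ ⊆ u := by
    intro x₀ u hu
    obtain ⟨r, hr, hb⟩ := Metric.mem_nhds_iff.1 hu
    refine ⟨ball x₀ (r/3), ball_mem_nhds _ (by positivity), (ball_subset_ball (by linarith)).trans hb, ?_⟩
    intro x hx y hy z hz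
    apply hb
    rw [mem_ball] at *
    rw [mem_closedBall, ← dist_eq_norm] at hz
    have := dist_triangle z x x₀
    have := dist_triangle y x₀ x
    rw [dist_comm x₀ x] at this
    linarith
  have h1 : dimH (F '' Z1) < 1 := by
    have : dimH (F '' Z1) ≤ dimH Z1 / (3:ℝ≥0) := by
      apply dimH_image_le_of_locally_holder_on (by norm_num)
      intro x₀ _
      obtain ⟨C, u, hu, hlip⟩ := (hF2.contDiffAt (x := x₀)).of_le (m := 1) (by simp) |>.exists_lipschitzOnWith
      obtain ⟨t, ht, htu, htt⟩ := hnear x₀ u hu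
      refine ⟨C, Z1 ∩ t, inter_mem_nhdsWithin _ ht, ?_⟩
      intro x hx y hy
      have e2 : ∀ z ∈ closedBall x ‖y - x‖, ‖fderiv ℝ (fderiv ℝ F) z‖ ≤ C * ‖z - x‖ := by
        intro z hz
        have := hlip.norm_sub_le (htt x hx.2 y hy.2 hz) (htu hx.2)
        rwa [hx.1.2, sub_zero] at this
      have e1 : ∀ z ∈ closedBall x ‖y - x‖, ‖fderiv ℝ F z‖ ≤ C * ‖z - x‖ * ‖z - x‖ := by
        intro z hz
        rw [mem_closedBall, dist_eq_norm] at hz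
        have := A_mv (x := x) (y := z) (M := C * ‖z - x‖) dF1 (by
          intro z' hz'
          rw [mem_closedBall, dist_eq_norm] at hz'
          refine (e2 z' (by rw [mem_closedBall, dist_eq_norm]; linarith)).trans (by gcongr))
        rwa [hx.1.1, sub_zero] at this
      have e0 := A_mv (x := x) (y := y) (M := C * ‖y - x‖ * ‖y - x‖) dF (by
          intro z' hz'
          refine (e1 z' hz').trans ?_
          rw [mem_closedBall, dist_eq_norm] at hz'
          gcongr)
      rw [edist_dist, edist_dist, dist_comm, dist_comm x, Real.dist_eq, dist_eq_norm]
      rw [ENNReal.ofReal_rpow_of_nonneg (by positivity) (by norm_num), ← ENNReal.ofReal_coe_nnreal, ← ENNReal.ofReal_mul (by simp)]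
      apply ENNReal.ofReal_le_ofReal
      rw [Real.norm_eq_abs] at e0
      refine e0.trans (le_of_eq ?_)
      norm_num
      ring
    refine this.trans_lt ?_
    have h2 : dimH Z1 ≤ 2 := by
      have := (dimH_mono (subset_univ Z1)).trans_eq (Real.dimH_univ_eq_finrank ℂ)
      simpa [Complex.finrank_real_complex] using this
    rw [ENNReal.div_lt_iff (by simp) (by simp)]
    refine h2.trans_lt ?_
    norm_num
  have h2 : dimH (F '' Z2) < 1 := by
    have : dimH (F '' Z2) ≤ dimH Z2 / (2:ℝ≥0) := by
      apply dimH_image_le_of_locally_holder_on (by norm_num)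
      intro x₀ _
      obtain ⟨C, u, hu, hlip⟩ := (hF1.contDiffAt (x := x₀)).of_le (m := 1) (by simp) |>.exists_lipschitzOnWith
      obtain ⟨t, ht, htu, htt⟩ := hnear x₀ u hu
      refine ⟨C, Z2 ∩ t, inter_mem_nhdsWithin _ ht, ?_⟩
      intro x hx y hy
      have e2 : ∀ z ∈ closedBall x ‖y - x‖, ‖fderiv ℝ F z‖ ≤ C * ‖z - x‖ := by
        intro z hz
        have := hlip.norm_sub_le (htt x hx.2 y hy.2 hz) (htu hx.2)
        rwa [hx.1.1, sub_zero] at this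
      have e0 := A_mv (x := x) (y := y) (M := C * ‖y - x‖) dF (by
          intro z' hz'
          refine (e2 z' hz').trans ?_
          rw [mem_closedBall, dist_eq_norm] at hz'
          gcongr)
      rw [edist_dist, edist_dist, dist_comm, dist_comm x, Real.dist_eq, dist_eq_norm]
      rw [ENNReal.ofReal_rpow_of_nonneg (by positivity) (by norm_num), ← ENNReal.ofReal_coe_nnreal, ← ENNReal.ofReal_mul (by simp)]
      apply ENNReal.ofReal_le_ofReal
      rw [Real.norm_eq_abs] at e0
      refine e0.trans (le_of_eq ?_)
      norm_num
      ring
    refine this.trans_lt ?_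
    have h2 : dimH Z2 ≤ 1 := by
      by_contra hcon
      obtain ⟨x, hx, hx'⟩ := exists_mem_nhdsWithin_lt_dimH_of_lt_dimH (not_le.1 hcon)
      obtain ⟨v, hv⟩ : ∃ v, (fderiv ℝ (fderiv ℝ F) x).flip v ≠ 0 := by
        by_contra! hh
        apply hx.2
        ext a b
        have := DFunLike.congr_fun (hh b) a
        simpa using this
      have hst : HasStrictFDerivAt (fun y => fderiv ℝ F y v) ((fderiv ℝ (fderiv ℝ F) x).flip v) x :=
        ((ContinuousLinearMap.apply ℝ ℝ v).hasStrictFDerivAt.comp x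
          (hF1.contDiffAt.hasStrictFDerivAt (by simp)))
      have heq := hst.hasFDerivAt.fderiv
      rw [← heq] at hst hv
      obtain ⟨t, ht, hd⟩ := A_curve hst hv
      have := hx' (Z2 ∩ t) (inter_mem_nhdsWithin _ ht)
      refine absurd (this.trans_le ((dimH_mono ?_).trans hd)) (lt_irrefl _)
      rintro y ⟨hy1, hy2⟩
      refine ⟨hy2, ?_⟩
      simp [hy1.1]
    rw [ENNReal.div_lt_iff (by simp) (by simp)]
    refine h2.trans_lt ?_
    norm_num
  have hFK : dimH (F '' K) < 1 := by
    have : F '' K ⊆ F '' Z1 ∪ F '' Z2 := by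
      rw [← image_union]
      apply image_mono
      intro x hx
      by_cases h : fderiv ℝ (fderiv ℝ F) x = 0
      · exact Or.inl ⟨hc x hx, h⟩
      · exact Or.inr ⟨hc x hx, h⟩
    refine (dimH_mono this).trans_lt ?_
    rw [dimH_union]
    exact max_lt h1 h2
  have hpre : IsPreconnected (F '' K) := hK.image F hF.continuous.continuousOn
  have hlt : ∀ x ∈ K, ∀ y ∈ K, ¬ F x < F y := by
    intro x hx y hy hxy
    have hsub : Icc (F x) (F y) ⊆ F '' K := hpre.Icc_subset ⟨x, hx, rfl⟩ ⟨y, hy, rfl⟩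
    have : dimH (Icc (F x) (F y)) = Module.finrank ℝ ℝ := by
      apply Real.dimH_of_nonempty_interior
      rw [interior_Icc]
      exact nonempty_Ioo.2 hxy
    have h3 := (dimH_mono hsub).trans_lt hFK
    rw [this] at h3
    simp at h3
  intro x hx y hy
  exact le_antisymm (not_lt.1 (hlt y hy x hx)) (not_lt.1 (hlt x hx y hy))
end

section
open Set Metric Filter Topology
open scoped NNReal ENNReal

lemma B_Q : ∃ Q : ℝ → ℝ, ContDiff ℝ (⊤ : ℕ∞) Q ∧ (∀ y, |y| ≤ 1 / 2 → Q y = 0) ∧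
    (∀ y, 0 ≤ deriv Q y) ∧ (∀ y, 1 ≤ |y| → 1 / 2 ≤ deriv Q y) ∧ ∀ y, |2 * Q y - y| ≤ 1 := by
  let θ : ℝ → ℝ := fun y => Real.smoothTransition (2 * y ^ 2 - 1)
  have hθ : ContDiff ℝ (⊤ : ℕ∞) θ := Real.smoothTransition.contDiff.comp (by fun_prop)
  have hd : ∀ y, deriv (fun y => 1 / 2 * y * θ y) y = 1 / 2 * θ y + 2 * y ^ 2 * deriv Real.smoothTransition (2 * y ^ 2 - 1) := by
    intro y
    have h1 : HasDerivAt Real.smoothTransition (deriv Real.smoothTransition (2 * y ^ 2 - 1)) (2 * y ^ 2 - 1) :=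
      ((Real.smoothTransition.contDiff (n := 1)).differentiable (by simp) _).hasDerivAt
    have h2 : HasDerivAt (fun y : ℝ => 2 * y ^ 2 - 1) (2 * (2 * y)) y := by
      simpa using ((hasDerivAt_pow 2 y).const_mul 2).sub_const 1
    have h3 := ((hasDerivAt_id y).const_mul (1/2)).mul (h1.comp y h2)
    refine h3.deriv.trans ?_
    simp [θ]; ring
  have hmon : ∀ y, 0 ≤ deriv Real.smoothTransition y := fun y => Real.smoothTransition.monotone.deriv_nonneg
  refine ⟨fun y => 1 / 2 * y * θ y, by fun_prop, ?_, ?_, ?_, ?_⟩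
  · intro y hy
    have : θ y = 0 := Real.smoothTransition.zero_of_nonpos (by nlinarith [sq_abs y, abs_nonneg y])
    simp [this]
  · intro y
    rw [hd]
    have := hmon (2 * y ^ 2 - 1)
    have := Real.smoothTransition.nonneg (2 * y ^ 2 - 1)
    positivity
  · intro y hy
    rw [hd]
    have h1 := hmon (2 * y ^ 2 - 1)
    have : θ y = 1 := Real.smoothTransition.one_of_one_le (by nlinarith [sq_abs y, abs_nonneg y])
    rw [this]
    have : 0 ≤ 2 * y ^ 2 * deriv Real.smoothTransition (2 * y ^ 2 - 1) := by positivity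
    linarith
  · intro y
    have e : 2 * (1 / 2 * y * θ y) - y = - (y * (1 - θ y)) := by ring
    rw [e, abs_neg, abs_mul]
    have h0 : 0 ≤ θ y := Real.smoothTransition.nonneg _
    have h1 : θ y ≤ 1 := Real.smoothTransition.le_one _
    rw [abs_of_nonneg (by linarith : 0 ≤ 1 - θ y)]
    by_cases hy : |y| ≤ 1
    · nlinarith [abs_nonneg y]
    · have : θ y = 1 := Real.smoothTransition.one_of_one_le (by nlinarith [sq_abs y, abs_nonneg y])
      simp [this]

lemma B_ser {T : ℕ → ℂ → ℝ} (hT : ∀ j, ContDiff ℝ (⊤ : ℕ∞) (T j)) (hc : ∀ j, HasCompactSupport (T j))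
    {b : ℕ → ℝ} (hb : ∀ j, 0 < b j) (hbs : Summable b) :
    ∃ c : ℕ → ℝ, (∀ j, 0 < c j) ∧ (∀ j, c j ≤ b j) ∧ (∀ j x, ‖c j * T j x‖ ≤ b j) ∧
      (∀ j x, ‖c j • fderiv ℝ (T j) x‖ ≤ b j) ∧
      ContDiff ℝ (⊤ : ℕ∞) (fun x => ∑' j, c j * T j x) ∧
      ∀ x, fderiv ℝ (fun x => ∑' j, c j * T j x) x = ∑' j, c j • fderiv ℝ (T j) x := by
  have hM : ∀ k j, ∃ M : ℝ, 0 ≤ M ∧ ∀ x, ‖iteratedFDeriv ℝ k (T j) x‖ ≤ M := by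
    intro k j
    obtain ⟨M, hM⟩ := ((hc j).iteratedFDeriv (𝕜 := ℝ) k).exists_bound_of_continuous
      ((hT j).continuous_iteratedFDeriv (by exact_mod_cast le_top))
    exact ⟨M, (norm_nonneg _).trans (hM 0), hM⟩
  choose M hM0 hM using hM
  let N : ℕ → ℝ := fun j => 1 + ∑ k ∈ Finset.range (j + 2), M k j
  have hN : ∀ j, 1 ≤ N j := fun j => by
    have : 0 ≤ ∑ k ∈ Finset.range (j + 2), M k j := Finset.sum_nonneg fun k _ => hM0 k j
    simp only [N]; linarith
  have hMN : ∀ j k, k < j + 2 → M k j ≤ N j := by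
    intro j k hk
    have : M k j ≤ ∑ k ∈ Finset.range (j + 2), M k j :=
      Finset.single_le_sum (f := fun k => M k j) (fun k _ => hM0 k j) (Finset.mem_range.2 hk)
    simp only [N]; linarith
  have hNp : ∀ j, 0 < N j := fun j => by linarith [hN j]
  have hbd : ∀ j k, k < j + 2 → ∀ y, y ≤ M k j → b j / N j * y ≤ b j := by
    intro j k hk y hy
    rw [div_mul_eq_mul_div, div_le_iff₀ (hNp j)]
    exact mul_le_mul_of_nonneg_left (hy.trans (hMN j k hk)) (hb j).le
  have hf1 : ∀ j x, ‖(b j / N j) • fderiv ℝ (T j) x‖ ≤ b j := by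
    intro j x
    rw [norm_smul, Real.norm_eq_abs, abs_of_pos (div_pos (hb j) (hNp j))]
    refine hbd j 1 (by omega) _ ?_
    rw [← norm_iteratedFDeriv_one]; exact hM 1 j x
  have hf0 : ∀ j x, ‖(b j / N j) * T j x‖ ≤ b j := by
    intro j x
    rw [norm_mul, Real.norm_eq_abs, abs_of_pos (div_pos (hb j) (hNp j))]
    refine hbd j 0 (by omega) _ ?_
    rw [← norm_iteratedFDeriv_zero (𝕜 := ℝ)]; exact hM 0 j x
  have hfd : ∀ j x, fderiv ℝ (fun x => b j / N j * T j x) x = (b j / N j) • fderiv ℝ (T j) x := by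
    intro j x
    exact fderiv_const_mul ((hT j).differentiable (by simp) x) _
  refine ⟨fun j => b j / N j, fun j => div_pos (hb j) (hNp j), fun j => div_le_self (hb j).le (hN j), hf0, hf1, ?_, ?_⟩
  · apply contDiff_tsum_of_eventually (v := fun _ => b) (fun j => contDiff_const.mul (hT j)) (fun _ _ => hbs)
    intro k _
    rw [Nat.cofinite_eq_atTop]
    filter_upwards [eventually_ge_atTop k] with j hj x
    have : (fun x => b j / N j * T j x) = (b j / N j) • T j := rfl
    rw [this, iteratedFDeriv_const_smul_apply (((hT j).of_le (by exact_mod_cast le_top)).contDiffAt), norm_smul, Real.norm_eq_abs, abs_of_pos (div_pos (hb j) (hNp j))]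
    exact hbd j k (by omega) _ (hM k j x)
  · intro x
    have := fderiv_tsum (𝕜 := ℝ) (f := fun j x => b j / N j * T j x) (x₀ := 0) hbs
      (fun j => ((hT j).differentiable (by simp)).const_mul _) (fun j x => by rw [hfd]; exact hf1 j x)
      (Summable.of_norm_bounded hbs (fun j => hf0 j 0))
    rw [this]
    exact tsum_congr fun j => hfd j x

lemma B_geom : Summable (fun j : ℕ => (1/2:ℝ) ^ (j+2)) ∧ ∑' j : ℕ, (1/2:ℝ) ^ (j+2) = 1 / 2 := by
  have h := (hasSum_geometric_two).mul_right (1/4)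
  have e : (fun j : ℕ => (1/2:ℝ) ^ (j+2)) = fun j : ℕ => (1/2:ℝ) ^ j * (1 / 4) := by
    funext j; rw [pow_add]; norm_num
  rw [e]
  exact ⟨h.summable, by rw [h.tsum_eq]; norm_num⟩

lemma B_tau (a : ℂ) {ρ κ : ℝ} (hρ : 0 < ρ) (hκ : 0 < κ) {m : ℂ → ℝ}
    (hm : ContinuousOn m (closedBall a ρ \ {a})) (hm0 : ∀ x ∈ closedBall a ρ \ {a}, 0 < m x) :
    ∃ (τ : ℂ → ℝ) (S : ℝ), ContDiff ℝ (⊤ : ℕ∞) τ ∧ 0 < S ∧ S ≤ κ ∧ τ a = 0 ∧ (∀ x, x ≠ a → 0 < τ x) ∧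
      (∀ x, ρ ≤ dist x a → τ x = S) ∧ ∀ x ∈ closedBall a ρ \ {a}, ‖fderiv ℝ τ x‖ < m x := by
  let β : ℕ → ContDiffBump a := fun j => ⟨ρ * (1/2) ^ (j+1), ρ * (1/2) ^ j, by positivity, by
    rw [pow_succ]; have : 0 < ρ * (1/2) ^ j := by positivity
    linarith⟩
  have hmu : ∀ j : ℕ, ∃ μ : ℝ, 0 < μ ∧ ∀ x, ρ * (1/2) ^ (j+1) ≤ dist x a → dist x a ≤ ρ * (1/2) ^ j → μ ≤ m x := by
    intro j
    have hrp : ρ * (1/2) ^ j ≤ ρ := mul_le_of_le_one_right hρ.le (pow_le_one₀ (by norm_num) (by norm_num))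
    have hsub : closedBall a (ρ * (1/2) ^ j) \ ball a (ρ * (1/2) ^ (j+1)) ⊆ closedBall a ρ \ {a} := by
      rintro x ⟨h1, h2⟩
      refine ⟨closedBall_subset_closedBall hrp h1, fun h => h2 ?_⟩
      rw [mem_singleton_iff] at h
      rw [h]; exact mem_ball_self (by positivity)
    have hcomp : IsCompact (closedBall a (ρ * (1/2) ^ j) \ ball a (ρ * (1/2) ^ (j+1))) :=
      (isCompact_closedBall _ _).diff isOpen_ball
    rcases (closedBall a (ρ * (1/2) ^ j) \ ball a (ρ * (1/2) ^ (j+1))).eq_empty_or_nonempty with he | hne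
    · refine ⟨1, one_pos, fun x h1 h2 => ?_⟩
      have : x ∈ (∅ : Set ℂ) := by rw [← he]; exact ⟨h2, by simpa using h1⟩
      exact this.elim
    · obtain ⟨x0, hx0, hmin⟩ := hcomp.exists_isMinOn hne (hm.mono hsub)
      exact ⟨m x0, hm0 x0 (hsub hx0), fun x h1 h2 => hmin ⟨h2, by simpa using h1⟩⟩
  choose μ hμ hμm using hmu
  obtain ⟨gs, gt⟩ := B_geom
  have hle : ∀ j, min κ (μ j) * (1/2:ℝ)^(j+2) ≤ κ * (1/2:ℝ)^(j+2) := fun j =>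
    mul_le_mul_of_nonneg_right (min_le_left _ _) (by positivity)
  have hbpos : ∀ j, 0 < min κ (μ j) * (1/2:ℝ)^(j+2) := fun j => mul_pos (lt_min hκ (hμ j)) (by positivity)
  have hbs : Summable fun j => min κ (μ j) * (1/2:ℝ)^(j+2) :=
    Summable.of_nonneg_of_le (fun j => (hbpos j).le) hle (gs.mul_left κ)
  obtain ⟨t, t0, tb, ht0, ht1, hts, htd⟩ := B_ser (T := fun j => β j) (fun j => (β j).contDiff) (fun j => (β j).hasCompactSupport) hbpos hbs
  have tsum : Summable t := Summable.of_nonneg_of_le (fun j => (t0 j).le) tb hbs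
  have hS : 0 < ∑' j, t j := tsum.tsum_pos (fun j => (t0 j).le) 0 (t0 0)
  refine ⟨fun x => ∑' j, t j - ∑' j, t j * β j x, ∑' j, t j, contDiff_const.sub hts, hS, ?_, ?_, ?_, ?_, ?_⟩
  · calc ∑' j, t j ≤ ∑' j : ℕ, κ * (1/2:ℝ)^(j+2) := tsum.tsum_le_tsum (fun j => (tb j).trans (hle j)) (gs.mul_left κ)
      _ = κ * (1 / 2) := by rw [tsum_mul_left, gt]
      _ ≤ κ := by linarith
  · have : ∀ j, β j a = 1 := fun j => (β j).one_of_mem_closedBall (mem_closedBall_self (β j).rIn_pos.le)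
    simp [this]
  · intro x hx
    have hd : 0 < dist x a := dist_pos.2 hx
    obtain ⟨J, hJ⟩ := exists_pow_lt_of_lt_one (div_pos hd hρ) (by norm_num : (1/2:ℝ) < 1)
    rw [sub_pos]
    have hsum2 : Summable fun j => t j * β j x := Summable.of_norm_bounded hbs (fun j => ht0 j x)
    refine hsum2.tsum_lt_tsum (i := J) (fun j => mul_le_of_le_one_right (t0 j).le (β j).le_one) ?_ tsum
    have : β J x = 0 := (β J).zero_of_le_dist (by
      rw [lt_div_iff₀ hρ] at hJ
      show ρ * (1/2) ^ J ≤ _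
      linarith)
    rw [this, mul_zero]; exact t0 J
  · intro x hx
    have : ∀ j, β j x = 0 := fun j => (β j).zero_of_le_dist (by
      refine le_trans ?_ hx
      exact mul_le_of_le_one_right hρ.le (pow_le_one₀ (by norm_num) (by norm_num)))
    simp [this]
  · intro x hx
    have hfd : fderiv ℝ (fun x => ∑' j, t j - ∑' j, t j * β j x) x = - ∑' j, t j • fderiv ℝ (β j) x := by
      rw [← htd x]
      exact fderiv_const_sub _
    rw [hfd, norm_neg]
    have hmx := hm0 x hx
    have hbound : ∀ j, ‖t j • fderiv ℝ (β j) x‖ ≤ m x * (1/2:ℝ)^(j+2) := by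
      intro j
      by_cases h1 : dist x a < ρ * (1/2) ^ (j+1)
      · have : fderiv ℝ (β j) x = 0 := by
          rw [((β j).eventuallyEq_one_of_mem_ball h1).fderiv_eq]; simp
        rw [this]; simp; positivity
      by_cases h2 : ρ * (1/2) ^ j < dist x a
      · have : fderiv ℝ (β j) x = 0 := by
          have he : (β j : ℂ → ℝ) =ᶠ[𝓝 x] fun _ => 0 := by
            filter_upwards [(isOpen_lt continuous_const (continuous_id.dist continuous_const)).mem_nhds h2] with y hy
            exact (β j).zero_of_le_dist (le_of_lt hy)
          rw [he.fderiv_eq]; simp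
        rw [this]; simp; positivity
      · refine (ht1 j x).trans (mul_le_mul_of_nonneg_right ((min_le_right _ _).trans (hμm j x (not_lt.1 h1) (not_lt.1 h2))) (by positivity))
    calc ‖∑' j, t j • fderiv ℝ (β j) x‖ ≤ m x * (1 / 2) :=
          tsum_of_norm_bounded (by have := (gs.mul_left (m x)).hasSum; rwa [tsum_mul_left, gt] at this) hbound
      _ < m x := by linarith
end

section
open Set Metric Filter Topology
open scoped NNReal ENNReal

lemma B_pair {L N : ℂ →L[ℝ] ℝ} (h : ‖N‖ < ‖L‖) : ∃ v, |N v| < L v := by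
  by_contra! hc
  refine absurd h (not_lt.2 (L.opNorm_le_bound (norm_nonneg _) fun v => ?_))
  refine le_trans ?_ (N.le_opNorm v)
  rw [Real.norm_eq_abs, Real.norm_eq_abs, abs_le']
  refine ⟨hc v, ?_⟩
  have := hc (-v)
  simpa using this

theorem B_smooth {u : ℂ → ℝ} {a : ℂ} {r : ℝ} (hr : 0 < r) (hu : ContDiffOn ℝ (⊤ : ℕ∞) u {a}ᶜ)
    (hua : ContinuousAt u a) (hu0 : u a = 0) (hdu : ∀ x ∈ ball a r, x ≠ a → fderiv ℝ u x ≠ 0) :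
    ∃ G : ℂ → ℝ, ContDiff ℝ (⊤ : ℕ∞) G ∧ (∀ x, x ∉ ball a r → G x = u x) ∧
      ∀ x ∈ ball a r, x ≠ a → fderiv ℝ G x ≠ 0 := by
  obtain ⟨Q, hQ, hQ0, hQ1, hQ2, hQ3⟩ := B_Q
  have huA : ∀ x, x ≠ a → ContDiffAt ℝ (⊤ : ℕ∞) u x := fun x hx =>
    hu.contDiffAt (isOpen_compl_singleton.mem_nhds hx)
  have huc : ContinuousOn (fderiv ℝ u) {a}ᶜ := hu.continuousOn_fderiv_of_isOpen isOpen_compl_singleton (by simp)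
  let η : ContDiffBump a := ⟨r / 2, 3 * r / 4, by positivity, by linarith⟩
  have hηI : η.rIn = r / 2 := rfl
  have hηO : η.rOut = 3 * r / 4 := rfl
  have hηc : ContDiff ℝ (⊤ : ℕ∞) η := η.contDiff
  set Sh := closedBall a (3 * r / 4) \ ball a (r / 2) with hSh
  have hShne : ∀ x ∈ Sh, x ≠ a := by
    rintro x ⟨_, h⟩ rfl
    exact h (mem_ball_self (by positivity))
  have hShB : ∀ x ∈ Sh, x ∈ ball a r := by
    rintro x ⟨h, _⟩
    rw [mem_closedBall] at h; rw [mem_ball]; linarith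
  obtain ⟨δ, hδ, hδu⟩ : ∃ δ : ℝ, 0 < δ ∧ ∀ x ∈ Sh, δ ≤ ‖fderiv ℝ u x‖ := by
    have := ((isCompact_closedBall a (3 * r / 4)).diff (isOpen_ball (x := a) (ε := r/2))).exists_forall_le' (f := fun x => ‖fderiv ℝ u x‖) (a := 0) (huc.mono hShne).norm
      (fun x hx => norm_pos_iff.2 (hdu x (hShB x hx) (hShne x hx)))
    obtain ⟨δ, h1, h2⟩ := this
    exact ⟨δ, h1, h2⟩
  obtain ⟨M, hM⟩ := (η.hasCompactSupport.fderiv (𝕜 := ℝ)).exists_bound_of_continuous (hηc.continuous_fderiv (by simp))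
  have hM0 : 0 ≤ M := (norm_nonneg _).trans (hM 0)
  obtain ⟨τ, S, hτ, hS0, hSκ, hτa, hτp, hτS, hτd⟩ := B_tau a (ρ := r / 4) (κ := δ / (M + 1)) (by positivity) (by positivity)
    (m := fun x => ‖fderiv ℝ u x‖) (huc.mono fun x hx => hx.2).norm (by
      rintro x ⟨h1, h2⟩
      refine norm_pos_iff.2 (hdu x ?_ h2)
      rw [mem_closedBall] at h1; rw [mem_ball]; linarith)
  have hτd0 : ∀ x, r / 4 < dist x a → fderiv ℝ τ x = 0 := by
    intro x hx
    have he : τ =ᶠ[𝓝 x] fun _ => S := by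
      filter_upwards [(isOpen_lt continuous_const (continuous_id.dist continuous_const)).mem_nhds hx] with y hy
      exact hτS y (le_of_lt hy)
    rw [he.fderiv_eq]; simp
  have hτlt : ∀ x ∈ ball a r, x ≠ a → ‖fderiv ℝ τ x‖ < ‖fderiv ℝ u x‖ := by
    intro x hx hxa
    by_cases h : dist x a ≤ r / 4
    · exact hτd x ⟨h, hxa⟩
    · rw [hτd0 x (not_le.1 h), norm_zero]; exact norm_pos_iff.2 (hdu x hx hxa)
  let P : ℝ → ℂ → ℝ := fun s x => s * Q ((u x + τ x) / s) + s * Q ((u x - τ x) / s)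
  have hPd : ∀ s, 0 < s → ∀ x, x ≠ a → HasFDerivAt (P s)
      (deriv Q ((u x + τ x) / s) • (fderiv ℝ u x + fderiv ℝ τ x) + deriv Q ((u x - τ x) / s) • (fderiv ℝ u x - fderiv ℝ τ x)) x := by
    intro s hs x hx
    have h1 := ((huA x hx).differentiableAt (by simp)).hasFDerivAt
    have h2 := (hτ.differentiable (by simp) x).hasFDerivAt
    have hq : ∀ y, HasDerivAt Q (deriv Q y) y := fun y => (hQ.differentiable (by simp) y).hasDerivAt
    have e1 := (((hq _).comp_hasFDerivAt x ((h1.add h2).mul_const s⁻¹)).const_mul s)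
    have e2 := (((hq _).comp_hasFDerivAt x ((h1.sub h2).mul_const s⁻¹)).const_mul s)
    have e3 := e1.add e2
    have hl : ∀ (q : ℝ) (L : ℂ →L[ℝ] ℝ), s • q • s⁻¹ • L = q • L := by
      intro q L
      rw [smul_smul, smul_smul]; congr 1; field_simp
    rw [hl, hl] at e3
    exact e3
  have hPs : ∀ s, 0 < s → ∀ x, x ≠ a → ContDiffAt ℝ (⊤ : ℕ∞) (P s) x := by
    intro s hs x hx
    have h1 := huA x hx
    have h2 := hτ.contDiffAt (x := x)
    exact (contDiffAt_const.mul (hQ.contDiffAt.comp x ((h1.add h2).div_const s))).add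
      (contDiffAt_const.mul (hQ.contDiffAt.comp x ((h1.sub h2).div_const s)))
  have hP0 : ∀ s, 0 < s → P s =ᶠ[𝓝 a] 0 := by
    intro s hs
    have hc1 : ContinuousAt (fun x => |u x + τ x|) a := (hua.add hτ.continuous.continuousAt).abs
    have hc2 : ContinuousAt (fun x => |u x - τ x|) a := (hua.sub hτ.continuous.continuousAt).abs
    have h1 := hc1.eventually_lt (continuousAt_const (y := s / 2)) (by simp [hu0, hτa, hs])
    have h2 := hc2.eventually_lt (continuousAt_const (y := s / 2)) (by simp [hu0, hτa, hs])
    filter_upwards [h1, h2] with x hx1 hx2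
    have e1 : Q ((u x + τ x) / s) = 0 := hQ0 _ (by rw [abs_div, abs_of_pos hs, div_le_iff₀ hs]; linarith)
    have e2 : Q ((u x - τ x) / s) = 0 := hQ0 _ (by rw [abs_div, abs_of_pos hs, div_le_iff₀ hs]; linarith)
    simp [P, e1, e2]
  have hη1 : ∀ x, dist x a < r / 2 → (η : ℂ → ℝ) =ᶠ[𝓝 x] 1 := fun x hx => η.eventuallyEq_one_of_mem_ball hx
  set s := S / 2 with hs
  have hs0 : 0 < s := by positivity
  have hsM : s * M < δ / 2 := by
    have : S * (M + 1) ≤ δ := by rwa [le_div_iff₀ (by positivity)] at hSκ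
    rw [hs]; nlinarith
  let G0 : ℂ → ℝ := fun x => (1 - η x) * u x + η x * P s x
  have hG0 : ContDiff ℝ (⊤ : ℕ∞) G0 := by
    rw [contDiff_iff_contDiffAt]
    intro x
    by_cases hx : x = a
    · subst hx
      have : G0 =ᶠ[𝓝 x] fun _ => 0 := by
        filter_upwards [hP0 s hs0, hη1 x (by simpa using hr)] with y h1 h2
        simp [G0, h1, h2]
      exact contDiffAt_const.congr_of_eventuallyEq this
    · exact ((contDiffAt_const.sub hηc.contDiffAt).mul (huA x hx)).add (hηc.contDiffAt.mul (hPs s hs0 x hx))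
  let σ : ℕ → ℝ := fun j => s / (j + 1)
  have hσ : ∀ j, 0 < σ j := fun j => by positivity
  let T : ℕ → ℂ → ℝ := fun j x => η x * P (σ j) x
  have hT : ∀ j, ContDiff ℝ (⊤ : ℕ∞) (T j) := by
    intro j
    rw [contDiff_iff_contDiffAt]
    intro x
    by_cases hx : x = a
    · subst hx
      have : T j =ᶠ[𝓝 x] fun _ => 0 := by
        filter_upwards [hP0 _ (hσ j)] with y h1
        simp [T, h1]
      exact contDiffAt_const.congr_of_eventuallyEq this
    · exact (hηc.contDiffAt.mul (hPs _ (hσ j) x hx))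
  have hTc : ∀ j, HasCompactSupport (T j) := fun j => η.hasCompactSupport.mul_right
  set δ' := δ / 2 - s * M with hδ'
  have hδ'0 : 0 < δ' := by linarith
  obtain ⟨gs, gt⟩ := B_geom
  obtain ⟨c, c0, -, hcT, hcD, hcs, hcd⟩ := B_ser hT hTc (b := fun j => δ' * (1/2:ℝ)^(j+2)) (fun j => by positivity) (gs.mul_left _)
  let H : ℂ → ℝ := fun x => ∑' j, c j * T j x
  have hGd : ∀ x, fderiv ℝ (fun x => G0 x + H x) x = fderiv ℝ G0 x + ∑' j, c j • fderiv ℝ (T j) x := by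
    intro x
    rw [← hcd x]
    exact fderiv_add (hG0.differentiable (by simp) x) (hcs.differentiable (by simp) x)
  have hout : ∀ x, 3 * r / 4 ≤ dist x a → G0 x + H x = u x := by
    intro x hx
    have : η x = 0 := η.zero_of_le_dist hx
    simp [G0, H, T, this]
  refine ⟨fun x => G0 x + H x, hG0.add hcs, ?_, ?_⟩
  · intro x hx
    rw [mem_ball, not_lt] at hx
    exact hout x (by linarith)
  intro x hx hxa
  have hsumD : Summable fun j => c j • fderiv ℝ (T j) x := Summable.of_norm_bounded (gs.mul_left δ') (fun j => hcD j x)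
  rcases lt_or_ge (3 * r / 4) (dist x a) with h1 | h1
  · have he : (fun x => G0 x + H x) =ᶠ[𝓝 x] u := by
      filter_upwards [(isOpen_lt continuous_const (continuous_id.dist continuous_const)).mem_nhds h1] with y hy
      exact hout y (le_of_lt hy)
    rw [he.fderiv_eq]
    exact hdu x hx hxa
  rcases lt_or_ge (dist x a) (r / 2) with h2 | h2
  · obtain ⟨v, hv⟩ := B_pair (hτlt x hx hxa)
    have hpos : ∀ s, 0 < s → 0 ≤ fderiv ℝ (P s) x v := by
      intro s hs
      rw [(hPd s hs x hxa).fderiv]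
      rw [abs_lt] at hv
      have := mul_nonneg (hQ1 ((u x + τ x) / s)) (by linarith : 0 ≤ fderiv ℝ u x v + fderiv ℝ τ x v)
      have := mul_nonneg (hQ1 ((u x - τ x) / s)) (by linarith : 0 ≤ fderiv ℝ u x v - fderiv ℝ τ x v)
      simp
      linarith
    have hex : ∃ j, 0 < fderiv ℝ (P (σ j)) x v := by
      have hlarge : ∀ y : ℝ, y ≠ 0 → ∃ j, 0 < deriv Q (y / σ j) := by
        intro y hy
        obtain ⟨j, hj⟩ := exists_nat_gt (s / |y|)
        refine ⟨j, lt_of_lt_of_le (by norm_num) (hQ2 _ ?_)⟩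
        rw [abs_div, abs_of_pos (hσ j), le_div_iff₀ (hσ j), one_mul]
        rw [div_lt_iff₀ (abs_pos.2 hy)] at hj
        simp only [σ]
        rw [div_le_iff₀ (by positivity)]
        nlinarith [abs_pos.2 hy]
      have hτx := hτp x hxa
      rw [abs_lt] at hv
      by_cases hy : u x + τ x = 0
      · obtain ⟨j, hj⟩ := hlarge (u x - τ x) (by intro h; linarith)
        refine ⟨j, ?_⟩
        rw [(hPd _ (hσ j) x hxa).fderiv]
        have := mul_nonneg (hQ1 ((u x + τ x) / σ j)) (by linarith : 0 ≤ fderiv ℝ u x v + fderiv ℝ τ x v)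
        have := mul_pos hj (by linarith : 0 < fderiv ℝ u x v - fderiv ℝ τ x v)
        simp
        linarith
      · obtain ⟨j, hj⟩ := hlarge (u x + τ x) hy
        refine ⟨j, ?_⟩
        rw [(hPd _ (hσ j) x hxa).fderiv]
        have := mul_nonneg (hQ1 ((u x - τ x) / σ j)) (by linarith : 0 ≤ fderiv ℝ u x v - fderiv ℝ τ x v)
        have := mul_pos hj (by linarith : 0 < fderiv ℝ u x v + fderiv ℝ τ x v)
        simp
        linarith
    have hG0e : fderiv ℝ G0 x = fderiv ℝ (P s) x := by
      apply Filter.EventuallyEq.fderiv_eq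
      filter_upwards [hη1 x h2] with y h
      simp [G0, h]
    have hTe : ∀ j, fderiv ℝ (T j) x = fderiv ℝ (P (σ j)) x := by
      intro j
      apply Filter.EventuallyEq.fderiv_eq
      filter_upwards [hη1 x h2] with y h
      simp [T, h]
    intro h0
    have h3 := DFunLike.congr_fun (hGd x) v
    rw [h0] at h3
    have h4 : (∑' j, c j • fderiv ℝ (T j) x) v = ∑' j, c j * fderiv ℝ (P (σ j)) x v := by
      have := (ContinuousLinearMap.apply ℝ ℝ v).map_tsum hsumD
      simpa [hTe] using this
    have h5 : Summable fun j => c j * fderiv ℝ (P (σ j)) x v := by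
      have := (ContinuousLinearMap.apply ℝ ℝ v).summable hsumD
      simpa [hTe] using this
    obtain ⟨J, hJ⟩ := hex
    have h6 : 0 < ∑' j, c j * fderiv ℝ (P (σ j)) x v :=
      h5.tsum_pos (fun j => mul_nonneg (c0 j).le (hpos _ (hσ j))) J (mul_pos (c0 J) hJ)
    rw [add_apply, h4, hG0e] at h3
    have := hpos s hs0
    simp at h3
    linarith
  · have hxS : x ∈ Sh := ⟨h1, by simpa using h2⟩
    have hτx : τ x = S := hτS x (by linarith)
    have hτdx := hτd0 x (by linarith)
    have hη0 := η.nonneg (x := x)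
    have hη1 := η.le_one (x := x)
    have hD := (((hηc.differentiable (by simp) x).hasFDerivAt.const_sub 1).mul ((huA x hxa).differentiableAt (by simp)).hasFDerivAt).add
      ((hηc.differentiable (by simp) x).hasFDerivAt.mul (hPd s hs0 x hxa))
    set q1 := deriv Q ((u x + τ x) / s) with hq1
    set q2 := deriv Q ((u x - τ x) / s) with hq2
    have hq : 1 / 2 ≤ q1 + q2 := by
      have := hQ1 ((u x + τ x) / s)
      have := hQ1 ((u x - τ x) / s)
      rcases le_total 0 (u x) with h | h
      · have := hQ2 ((u x + τ x) / s) (by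
          rw [abs_div, abs_of_pos hs0, le_div_iff₀ hs0, abs_of_nonneg (by rw [hτx]; linarith), hτx]; linarith)
        linarith
      · have := hQ2 ((u x - τ x) / s) (by
          rw [abs_div, abs_of_pos hs0, le_div_iff₀ hs0, abs_of_nonpos (by rw [hτx]; linarith), hτx]; linarith)
        linarith
    have hG0d : fderiv ℝ G0 x = ((1 - η x) + η x * (q1 + q2)) • fderiv ℝ u x + (P s x - u x) • fderiv ℝ η x := by
      refine hD.fderiv.trans ?_
      rw [hτdx]
      ext v
      simp
      ring
    have hPu : |P s x - u x| ≤ s := by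
      have e : P s x - u x = s / 2 * ((2 * Q ((u x + τ x) / s) - (u x + τ x) / s) + (2 * Q ((u x - τ x) / s) - (u x - τ x) / s)) := by
        simp only [P]; field_simp; ring
      rw [e, abs_mul, abs_of_pos (by positivity)]
      have := abs_add_le (2 * Q ((u x + τ x) / s) - (u x + τ x) / s) (2 * Q ((u x - τ x) / s) - (u x - τ x) / s)
      have := hQ3 ((u x + τ x) / s)
      have := hQ3 ((u x - τ x) / s)
      nlinarith
    have hlow : δ' ≤ ‖fderiv ℝ G0 x‖ := by
      have hc : 1 / 2 ≤ (1 - η x) + η x * (q1 + q2) := by nlinarith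
      have e1 : δ / 2 ≤ ‖((1 - η x) + η x * (q1 + q2)) • fderiv ℝ u x‖ := by
        rw [norm_smul, Real.norm_eq_abs, abs_of_nonneg (by linarith)]
        have := hδu x hxS
        nlinarith
      have e2 : ‖(P s x - u x) • fderiv ℝ η x‖ ≤ s * M := by
        rw [norm_smul, Real.norm_eq_abs]
        exact mul_le_mul hPu (hM x) (norm_nonneg _) hs0.le
      rw [hG0d]
      have := norm_sub_le_norm_add (((1 - η x) + η x * (q1 + q2)) • fderiv ℝ u x) ((P s x - u x) • fderiv ℝ η x)
      linarith
    have hsm : ‖∑' j, c j • fderiv ℝ (T j) x‖ ≤ δ' * (1 / 2) :=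
      tsum_of_norm_bounded (by have := (gs.mul_left δ').hasSum; rwa [tsum_mul_left, gt] at this) (fun j => hcD j x)
    intro h0
    rw [hGd x] at h0
    rw [eq_neg_of_add_eq_zero_left h0, norm_neg] at hlow
    linarith
end

section
open Set Metric Filter Topology
open scoped ComplexConjugate

lemma C_chain {C : Set ℂ} (hC : IsPreconnected C) {ε : ℝ} (hε : 0 < ε) {P : ℂ → Prop}
    (hP : ∀ w ∈ C, ∀ w' ∈ C, dist w w' < ε → P w → P w') {a : ℂ} (ha : a ∈ C) (hPa : P a) :
    ∀ w ∈ C, P w := by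
  by_contra! hcon
  obtain ⟨b, hb, hPb⟩ := hcon
  let O : (ℂ → Prop) → Set ℂ := fun R => ⋃ w ∈ {w | w ∈ C ∧ R w}, ball w ε
  have hO : ∀ R, IsOpen (O R) := fun R => isOpen_biUnion fun _ _ => isOpen_ball
  have hm : ∀ R w, w ∈ C → R w → w ∈ O R := fun R w h1 h2 =>
    mem_biUnion (x := w) ⟨h1, h2⟩ (mem_ball_self hε)
  obtain ⟨x, hx, h1, h2⟩ := hC (O P) (O fun w => ¬ P w) (hO _) (hO _)
    (fun w hw => (em (P w)).elim (fun h => Or.inl (hm _ w hw h)) (fun h => Or.inr (hm _ w hw h)))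
    ⟨a, ha, hm _ a ha hPa⟩ ⟨b, hb, hm _ b hb hPb⟩
  simp only [O, mem_iUnion] at h1 h2
  obtain ⟨w, ⟨hw, hPw⟩, hxw⟩ := h1
  obtain ⟨w', ⟨hw', hPw'⟩, hxw'⟩ := h2
  rw [mem_ball, dist_comm] at hxw
  exact hPw' (hP x hx w' hw' hxw' (hP w hw x hx hxw hPw))

lemma C_sqrt_cpt {C D : Set ℂ} (hD : D ⊆ ball 0 1) (hC : C = closedBall 0 1 \ D) (hCc : IsPreconnected C)
    {ε : ℝ} (hε : 0 < ε) {w : ℂ} (hw : w ∈ C) :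
    ∃ s : ℂ → ℂ, ContinuousOn s {z | z ∈ D ∧ ∀ c ∈ C, ε < dist z c} ∧
      ∀ z ∈ {z | z ∈ D ∧ ∀ c ∈ C, ε < dist z c}, s z ^ 2 = z - w := by
  have h1 : (1 : ℂ) ∈ C := by
    rw [hC]
    refine ⟨by simp, fun h => ?_⟩
    have := hD h
    simp at this
  refine C_chain hCc hε (P := fun w => ∃ s : ℂ → ℂ, ContinuousOn s {z | z ∈ D ∧ ∀ c ∈ C, ε < dist z c} ∧
      ∀ z ∈ {z | z ∈ D ∧ ∀ c ∈ C, ε < dist z c}, s z ^ 2 = z - w) ?_ h1 ?_ w hw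
  · rintro w hw w' hw' hd ⟨s, hs, hsq⟩
    have hne : ∀ z ∈ {z | z ∈ D ∧ ∀ c ∈ C, ε < dist z c}, z - w ≠ 0 := by
      rintro z ⟨_, hz⟩ h
      have := hz w hw
      rw [sub_eq_zero] at h
      rw [h, dist_self] at this
      linarith
    refine ⟨fun z => s z * (1 + (w - w') / (z - w)) ^ ((2:ℂ)⁻¹), ?_, ?_⟩
    · refine hs.mul ?_
      intro z hz
      have hsl : 1 + (w - w') / (z - w) ∈ Complex.slitPlane := by
        left
        have h2 : ‖(w - w') / (z - w)‖ < 1 := by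
          rw [norm_div, div_lt_one (norm_pos_iff.2 (hne z hz)), ← dist_eq_norm, ← dist_eq_norm]
          exact hd.trans (hz.2 w hw)
        have h3 := Complex.abs_re_le_norm ((w - w') / (z - w))
        rw [Complex.add_re, Complex.one_re]
        have := neg_abs_le ((w - w') / (z - w)).re
        linarith
      refine ContinuousAt.comp_continuousWithinAt (g := fun x : ℂ => x ^ ((2:ℂ)⁻¹)) (continuousAt_cpow_const hsl) ?_
      exact continuousWithinAt_const.add (continuousWithinAt_const.div (continuousWithinAt_id.sub continuousWithinAt_const) (hne z hz))
    · intro z hz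
      have h0 := hne z hz
      rw [mul_pow, Complex.cpow_ofNat_inv_pow, hsq z hz]
      field_simp
      ring
  · refine ⟨fun z => Complex.I * (1 - z) ^ ((2:ℂ)⁻¹), ?_, ?_⟩
    · intro z hz
      refine continuousWithinAt_const.mul ?_
      refine ContinuousAt.comp_continuousWithinAt (g := fun x : ℂ => x ^ ((2:ℂ)⁻¹)) (f := fun z => 1 - z) (continuousAt_cpow_const ?_) (continuousWithinAt_const.sub continuousWithinAt_id)
      left
      have h2 := hD hz.1
      have h3 := Complex.re_le_norm z
      simp at h2 ⊢
      linarith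
    · intro z hz
      rw [mul_pow, Complex.cpow_ofNat_inv_pow, Complex.I_sq]
      ring

lemma C_sqrt {C D : Set ℂ} (hDo : IsOpen D) (hD : D ⊆ ball 0 1) (hC : C = closedBall 0 1 \ D) (hCc : IsPreconnected C)
    (h0 : (0:ℂ) ∈ C) : ∃ s : ℂ → ℂ, ContinuousOn s D ∧ ∀ z ∈ D, s z ^ 2 = z := by
  have hCcl : IsClosed C := by rw [hC]; exact (isClosed_closedBall).sdiff hDo
  let V : ℕ → Set ℂ := fun n => {z | z ∈ D ∧ ∀ c ∈ C, 1 / ((n:ℝ) + 1) < dist z c}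
  have hV : ∀ n, ∃ s : ℂ → ℂ, ContinuousOn s (V n) ∧ ∀ z ∈ V n, s z ^ 2 = z := by
    intro n
    obtain ⟨s, h1, h2⟩ := C_sqrt_cpt hD hC hCc (ε := 1 / ((n:ℝ) + 1)) (by positivity) h0
    exact ⟨s, h1, fun z hz => by simpa using h2 z hz⟩
  choose s hs hsq using hV
  have hloc : ∀ z ∈ D, ∃ r > 0, ∃ N, ∀ n ≥ N, ball z r ⊆ V n := by
    intro z hz
    have hzC : z ∈ Cᶜ ∩ D := ⟨fun h => by rw [hC] at h; exact h.2 hz, hz⟩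
    obtain ⟨r, hr, hb⟩ := Metric.isOpen_iff.1 (hCcl.isOpen_compl.inter hDo) z hzC
    obtain ⟨N, hN⟩ := exists_nat_one_div_lt (half_pos hr)
    refine ⟨r / 2, half_pos hr, N, fun n hn y hy => ⟨(hb (ball_subset_ball (by linarith) hy)).2, fun c hc => ?_⟩⟩
    have h1 : 1 / ((n:ℝ) + 1) ≤ 1 / ((N:ℝ) + 1) := by
      apply one_div_le_one_div_of_le (by positivity)
      have : (N:ℝ) ≤ n := by exact_mod_cast hn
      linarith
    have h2 : r ≤ dist c z := by
      by_contra h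
      exact (hb (mem_ball.2 (not_le.1 h))).1 hc
    have h3 := dist_triangle c y z
    rw [mem_ball] at hy
    rw [dist_comm c y] at h3
    linarith
  have hne : ∀ z ∈ D, z ≠ 0 := by
    rintro z hz rfl
    rw [hC] at h0; exact h0.2 hz
  let 𝓕 : Filter ℕ := (Filter.hyperfilter ℕ : Filter ℕ)
  have h𝓕 : ∀ p : ℕ → Prop, (∀ᶠ n in atTop, p n) → ∀ᶠ n in 𝓕, p n := by
    intro p hp
    rw [← Nat.cofinite_eq_atTop] at hp
    exact hp.filter_mono Filter.hyperfilter_le_cofinite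
  classical
  -- the pointwise ultrafilter limit
  have hex : ∀ z, ∃ t : ℂ, z ∈ D → ∀ᶠ n in 𝓕, s n z = t := by
    intro z
    by_cases hz : z ∈ D
    · obtain ⟨r, hr, N, hN⟩ := hloc z hz
      have h1 : ∀ᶠ n in 𝓕, s n z = s N z ∨ s n z = - s N z := by
        apply h𝓕
        filter_upwards [eventually_ge_atTop N] with n hn
        apply sq_eq_sq_iff_eq_or_eq_neg.1
        rw [hsq n z (hN n hn (mem_ball_self hr)), hsq N z (hN N le_rfl (mem_ball_self hr))]
      rcases (Ultrafilter.eventually_or (f := Filter.hyperfilter ℕ)).1 h1 with h | h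
      · exact ⟨_, fun _ => h⟩
      · exact ⟨_, fun _ => h⟩
    · exact ⟨0, fun h => absurd h hz⟩
  choose t ht using hex
  refine ⟨t, ?_, ?_⟩
  · intro z hz
    apply ContinuousAt.continuousWithinAt
    obtain ⟨r, hr, N, hN⟩ := hloc z hz
    have hBD : ball z r ⊆ D := fun y hy => (hN N le_rfl hy).1
    have hcont : ContinuousAt (s N) z := ((hs N).mono (hN N le_rfl)).continuousAt (ball_mem_nhds z hr)
    have h1 : ∀ᶠ n in 𝓕, EqOn (s n) (s N) (ball z r) ∨ EqOn (s n) (-(s N)) (ball z r) := by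
      apply h𝓕
      filter_upwards [eventually_ge_atTop N] with n hn
      apply IsPreconnected.eq_or_eq_neg_of_sq_eq (convex_ball z r).isPreconnected ((hs n).mono (hN n hn)) ((hs N).mono (hN N le_rfl))
      · intro y hy
        simp [hsq n y (hN n hn hy), hsq N y (hN N le_rfl hy)]
      · intro y hy h
        have h2 := hsq N y (hN N le_rfl hy)
        rw [h] at h2
        exact hne y (hBD hy) (by rw [← h2]; simp)
    rcases (Ultrafilter.eventually_or (f := Filter.hyperfilter ℕ)).1 h1 with h | h
    · refine hcont.congr ?_
      filter_upwards [ball_mem_nhds z hr] with y hy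
      obtain ⟨n, h3, h4⟩ := ((ht y (hBD hy)).and h).exists
      rw [← h3, h4 hy]
    · refine hcont.neg.congr ?_
      filter_upwards [ball_mem_nhds z hr] with y hy
      obtain ⟨n, h3, h4⟩ := ((ht y (hBD hy)).and h).exists
      rw [← h3, h4 hy]
  · intro z hz
    obtain ⟨r, hr, N, hN⟩ := hloc z hz
    obtain ⟨n, h3, h4⟩ := ((ht z hz).and (h𝓕 _ (eventually_ge_atTop N))).exists
    rw [← h3]; exact hsq n z (hN n h4 (mem_ball_self hr))

lemma C_sq_pre {C' : Set ℂ} (hC : IsPreconnected C') (h0 : (0:ℂ) ∈ C') (hcl : IsClosed C') :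
    IsPreconnected ((fun z : ℂ => z ^ 2) ⁻¹' C') := by
  have hcont : Continuous fun z : ℂ => z ^ 2 := by fun_prop
  have hopen : IsOpenMap fun z : ℂ => z ^ 2 := (Complex.isOpenQuotientMap_pow 2).isOpenMap
  have key : ∀ u v : Set ℂ, IsClosed u → IsClosed v → (fun z : ℂ => z ^ 2) ⁻¹' C' ⊆ u ∪ v →
      (fun z : ℂ => z ^ 2) ⁻¹' C' ∩ (u ∩ v) = ∅ → (0:ℂ) ∈ u → (fun z : ℂ => z ^ 2) ⁻¹' C' ⊆ u := by
    intro u v hu hv hsub hdis h0u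
    by_contra hcon
    obtain ⟨p, hp, hpu⟩ := not_subset.1 hcon
    have h0A : (0:ℂ) ∈ (fun z : ℂ => z ^ 2) ⁻¹' C' := by simpa using h0
    have h0v : (0:ℂ) ∉ v := fun h => by
      have : (0:ℂ) ∈ (∅ : Set ℂ) := by rw [← hdis]; exact ⟨h0A, h0u, h⟩
      exact this
    -- second open set: complement of C' ∩ sq '' vᶜ ... use images
    have hS : ∀ z : ℂ, z ^ 2 ∈ C' → z ∈ v → z ∉ u := by
      intro z h1 h2 h3
      have : z ∈ (∅ : Set ℂ) := by rw [← hdis]; exact ⟨h1, h3, h2⟩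
      exact this
    have hSclosed : IsClosed ((fun z : ℂ => z ^ 2) '' ((fun z : ℂ => z ^ 2) ⁻¹' C' ∩ v)) := by
      have hprop : IsProperMap (fun z : ℂ => z ^ 2) := by
        rw [isProperMap_iff_tendsto_cocompact]
        refine ⟨hcont, ?_⟩
        apply tendsto_cocompact_of_tendsto_dist_comp_atTop (0:ℂ)
        simp only [dist_zero_right, norm_pow]
        exact (tendsto_pow_atTop (by norm_num)).comp tendsto_norm_cocompact_atTop
      exact hprop.isClosedMap _ ((hcl.preimage hcont).inter hv)
    obtain ⟨x, hx, ⟨z, hz, rfl⟩, hxS⟩ := hC ((fun z : ℂ => z ^ 2) '' uᶜ) ((fun z : ℂ => z ^ 2) '' ((fun z : ℂ => z ^ 2) ⁻¹' C' ∩ v))ᶜ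
      (hopen _ hu.isOpen_compl) hSclosed.isOpen_compl (by
        intro x hx
        by_cases h : x ∈ (fun z : ℂ => z ^ 2) '' ((fun z : ℂ => z ^ 2) ⁻¹' C' ∩ v)
        · obtain ⟨z, hz, rfl⟩ := h
          exact Or.inl ⟨z, hS z hz.1 hz.2, rfl⟩
        · exact Or.inr h) ⟨p ^ 2, hp, p, hpu, rfl⟩ ⟨0, h0, by
          rintro ⟨z, hz, h⟩
          have : z = 0 := by simpa using h
          rw [this] at hz
          exact h0v hz.2⟩
    exact hxS ⟨z, ⟨hx, (hsub hx).resolve_left hz⟩, rfl⟩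
  rw [isPreconnected_iff_subset_of_disjoint_closed]
  intro u v hu hv hsub hdis
  rcases hsub (show (0:ℂ) ∈ (fun z : ℂ => z ^ 2) ⁻¹' C' by simpa using h0) with h | h
  · exact Or.inl (key u v hu hv hsub hdis h)
  · exact Or.inr (key v u hv hu (by rwa [union_comm]) (by rwa [inter_comm v u]) h)
end

section
open Set Metric Filter Topology
open scoped ComplexConjugate

def Gd (D : Set ℂ) : Prop := IsOpen D ∧ D ⊆ ball 0 1 ∧ IsPreconnected D ∧ IsPreconnected (closedBall 0 1 \ D)

noncomputable def mob (w y : ℂ) : ℂ := (y - w) / (1 - conj w * y)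

lemma mob_den {w y : ℂ} (hw : ‖w‖ < 1) (hy : ‖y‖ ≤ 1) : 1 - conj w * y ≠ 0 := by
  intro h
  have h1 : conj w * y = 1 := (sub_eq_zero.1 h).symm
  have h2 : ‖conj w * y‖ = 1 := by rw [h1]; simp
  rw [norm_mul, RCLike.norm_conj] at h2
  nlinarith [norm_nonneg w, norm_nonneg y]

lemma mob_normSq (w y : ℂ) : ‖1 - conj w * y‖ ^ 2 - ‖y - w‖ ^ 2 = (1 - ‖w‖ ^ 2) * (1 - ‖y‖ ^ 2) := by
  simp only [← Complex.normSq_eq_norm_sq, Complex.normSq_apply]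
  simp
  ring

lemma mob_le {w y : ℂ} (hw : ‖w‖ < 1) (hy : ‖y‖ ≤ 1) : ‖mob w y‖ ≤ 1 := by
  have h := mob_normSq w y
  rw [mob, norm_div, div_le_one (norm_pos_iff.2 (mob_den hw hy))]
  refine (pow_le_pow_iff_left₀ (norm_nonneg _) (norm_nonneg _) two_ne_zero).1 ?_
  have : 0 ≤ (1 - ‖w‖ ^ 2) * (1 - ‖y‖ ^ 2) := mul_nonneg (by nlinarith [norm_nonneg w]) (by nlinarith [norm_nonneg y])
  linarith

lemma mob_lt {w y : ℂ} (hw : ‖w‖ < 1) (hy : ‖y‖ < 1) : ‖mob w y‖ < 1 := by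
  have h := mob_normSq w y
  rw [mob, norm_div, div_lt_one (norm_pos_iff.2 (mob_den hw hy.le))]
  apply lt_of_pow_lt_pow_left₀ 2 (norm_nonneg _)
  have : 0 < (1 - ‖w‖ ^ 2) * (1 - ‖y‖ ^ 2) := mul_pos (by nlinarith [norm_nonneg w]) (by nlinarith [norm_nonneg y])
  linarith

lemma mob_inv {w y : ℂ} (hw : ‖w‖ < 1) (hy : ‖y‖ ≤ 1) : mob (-w) (mob w y) = y := by
  have h1 := mob_den hw hy
  have h2 := mob_den (w := -w) (by simpa using hw) (mob_le hw hy)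
  rw [mob, div_eq_iff h2]
  simp only [mob, map_neg]
  generalize conj w = v at *
  have e : (y - w) / (1 - v * y) * (1 - v * y) = y - w := div_mul_cancel₀ _ h1
  generalize (y - w) / (1 - v * y) = q at *
  linear_combination e

lemma mob_cont {w : ℂ} (hw : ‖w‖ < 1) : ContinuousOn (mob w) (closedBall 0 1) := by
  unfold mob
  apply ContinuousOn.div (by fun_prop) (by fun_prop)
  intro y hy
  exact mob_den hw (by simpa using hy)

lemma mob_deriv {w y : ℂ} (hw : ‖w‖ < 1) (hy : ‖y‖ ≤ 1) :
    HasDerivAt (mob w) ((1 - conj w * w) / (1 - conj w * y) ^ 2) y := by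
  have h1 : HasDerivAt (fun y : ℂ => y - w) 1 y := (hasDerivAt_id y).sub_const w
  have h2 : HasDerivAt (fun y : ℂ => 1 - conj w * y) (-(conj w * 1)) y := ((hasDerivAt_id y).const_mul (conj w)).const_sub 1
  have h3 := h1.div h2 (mob_den hw hy)
  refine h3.congr_deriv ?_
  congr 1; ring

lemma mob_gd {w : ℂ} (hw : ‖w‖ < 1) {D : Set ℂ} (hD : Gd D) : Gd (mob w '' D) := by
  obtain ⟨h1, h2, h3, h4⟩ := hD
  have hw' : ‖-w‖ < 1 := by simpa using hw
  have hDn : ∀ y ∈ D, ‖y‖ < 1 := fun y hy => by simpa using h2 hy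
  have hinv' : ∀ {y : ℂ}, ‖y‖ ≤ 1 → mob w (mob (-w) y) = y := fun hy => by
    simpa using mob_inv hw' hy
  refine ⟨?_, ?_, ?_, ?_⟩
  · have : mob w '' D = ball 0 1 ∩ mob (-w) ⁻¹' D := by
      ext y
      constructor
      · rintro ⟨x, hx, rfl⟩
        refine ⟨by simpa using mob_lt hw (hDn x hx), ?_⟩
        rw [mem_preimage, mob_inv hw (hDn x hx).le]; exact hx
      · rintro ⟨hy, hy'⟩
        exact ⟨_, hy', hinv' (by simpa using le_of_lt (mem_ball.1 hy))⟩
    rw [this]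
    exact ((mob_cont hw').mono ball_subset_closedBall).isOpen_inter_preimage isOpen_ball h1
  · rintro _ ⟨x, hx, rfl⟩
    simpa using mob_lt hw (hDn x hx)
  · exact h3.image _ ((mob_cont hw).mono (h2.trans ball_subset_closedBall))
  · have : closedBall 0 1 \ mob w '' D = mob w '' (closedBall 0 1 \ D) := by
      ext y
      constructor
      · rintro ⟨hy, hy'⟩
        have hy1 : ‖y‖ ≤ 1 := by simpa using hy
        refine ⟨mob (-w) y, ⟨by simpa using mob_le hw' hy1, fun h => hy' ⟨_, h, hinv' hy1⟩⟩, hinv' hy1⟩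
      · rintro ⟨x, ⟨hx, hx'⟩, rfl⟩
        have hx1 : ‖x‖ ≤ 1 := by simpa using hx
        refine ⟨by simpa using mob_le hw hx1, ?_⟩
        rintro ⟨z, hz, hzx⟩
        apply hx'
        rw [← mob_inv hw hx1, ← hzx, mob_inv hw (hDn z hz).le]; exact hz
    rw [this]
    exact h4.image _ ((mob_cont hw).mono sdiff_subset)

lemma sqrt_gd {D : Set ℂ} (hD : Gd D) (h0 : (0:ℂ) ∉ D) {s : ℂ → ℂ} (hs : ContinuousOn s D) (hsq : ∀ z ∈ D, s z ^ 2 = z)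
    (hne : D.Nonempty) : Gd (s '' D) := by
  obtain ⟨h1, h2, h3, h4⟩ := hD
  have hcont : Continuous fun z : ℂ => z ^ 2 := by fun_prop
  have hDn : ∀ y ∈ D, ‖y‖ < 1 := fun y hy => by simpa using h2 hy
  have hs1 : ∀ y ∈ D, ‖s y‖ < 1 := by
    intro y hy
    have h := hDn y hy
    rw [← hsq y hy, norm_pow] at h
    exact (pow_lt_one_iff_of_nonneg (norm_nonneg _) (by norm_num)).1 h
  have hsub : s '' D ⊆ ball 0 1 := by
    rintro _ ⟨y, hy, rfl⟩; simpa using hs1 y hy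
  have hopen : IsOpen (s '' D) := by
    have : s '' D = ((fun z : ℂ => z ^ 2) ⁻¹' D) ∩ (fun z => s (z ^ 2) + z) ⁻¹' {0}ᶜ := by
      ext z
      constructor
      · rintro ⟨y, hy, rfl⟩
        refine ⟨by simpa [hsq y hy] using hy, ?_⟩
        simp only [mem_preimage, hsq y hy, mem_compl_iff, mem_singleton_iff]
        intro h
        have h5 : s y = 0 := by
          have : (2:ℂ) * s y = 0 := by rw [two_mul]; exact h
          simpa using this
        have := hsq y hy
        rw [h5] at this
        apply h0
        rw [← this] at hy
        simpa using hy
      · rintro ⟨hz, hz'⟩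
        refine ⟨z ^ 2, hz, ?_⟩
        rcases sq_eq_sq_iff_eq_or_eq_neg.1 (hsq _ hz) with h | h
        · exact h
        · exact absurd (by rw [h]; simp : s (z ^ 2) + z = 0) hz'
    rw [this]
    apply ContinuousOn.isOpen_inter_preimage _ (h1.preimage hcont) isOpen_compl_singleton
    exact (hs.comp hcont.continuousOn (fun z hz => hz)).add continuousOn_id
  have hpre : IsPreconnected (s '' D) := h3.image s hs
  have hdisj : ∀ z, z ∈ s '' D → -z ∉ s '' D := by
    rintro _ ⟨y, hy, rfl⟩ ⟨x, hx, hxy⟩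
    have e : x = y := by rw [← hsq x hx, ← hsq y hy, hxy]; ring
    rw [e] at hxy
    have h5 : s y = 0 := self_eq_neg.1 hxy
    have := hsq y hy
    rw [h5] at this
    apply h0
    rw [← this] at hy
    simpa using hy
  refine ⟨hopen, hsub, hpre, ?_⟩
  set A := (fun z : ℂ => z ^ 2) ⁻¹' (closedBall 0 1 \ D) with hA
  set B := (fun z : ℂ => -z) '' (s '' D) with hB
  have hAp : IsPreconnected A := C_sq_pre h4 ⟨by simp, h0⟩ (isClosed_closedBall.sdiff h1)
  have hBp : IsPreconnected B := hpre.image _ continuous_neg.continuousOn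
  have hBo : IsOpen B := (Homeomorph.neg ℂ).isOpenMap _ hopen
  have hBne : B.Nonempty := (hne.image s).image _
  have hBsub : B ⊆ ball 0 1 := by
    rintro _ ⟨z, hz, rfl⟩
    have := hsub hz
    simpa using this
  have hBC : B ⊆ closedBall 0 1 \ s '' D := by
    intro z hz
    refine ⟨ball_subset_closedBall (hBsub hz), ?_⟩
    obtain ⟨y, hy, rfl⟩ := hz
    exact hdisj y hy
  have hAC : A ⊆ closedBall 0 1 \ s '' D := by
    rintro z ⟨hz1, hz2⟩
    refine ⟨?_, ?_⟩
    · simp at hz1 ⊢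
      exact hz1
    · rintro ⟨y, hy, rfl⟩
      apply hz2
      simpa [hsq y hy] using hy
  have hCAB : closedBall 0 1 \ s '' D ⊆ A ∪ B := by
    rintro z ⟨hz1, hz2⟩
    by_cases h : z ^ 2 ∈ D
    · right
      rcases sq_eq_sq_iff_eq_or_eq_neg.1 (hsq _ h) with h' | h'
      · exact absurd ⟨_, h, h'⟩ hz2
      · exact ⟨_, ⟨_, h, h'⟩, by simp⟩
    · left
      refine ⟨?_, h⟩
      simp at hz1 ⊢
      exact hz1
  have hEq : closedBall 0 1 \ s '' D = A ∪ B := Subset.antisymm hCAB (union_subset hAC hBC)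
  obtain ⟨p, hp⟩ : (frontier B).Nonempty := by
    rw [nonempty_frontier_iff]
    refine ⟨hBne, fun h => ?_⟩
    have : (1:ℂ) ∈ B := by rw [h]; trivial
    have := hBsub this
    simp at this
  have hpB : p ∉ B := by
    rw [hBo.frontier_eq] at hp; exact hp.2
  have hpcl : p ∈ closure B := frontier_subset_closure hp
  have hpA : p ∈ A := by
    have : p ∈ closedBall (0:ℂ) 1 \ s '' D := by
      have hcl : IsClosed (closedBall (0:ℂ) 1 \ s '' D) := isClosed_closedBall.sdiff hopen
      exact hcl.closure_subset_iff.2 hBC hpcl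
    exact (hCAB this).resolve_right hpB
  rw [hEq]
  have hBp' : IsPreconnected (insert p B) := hBp.subset_closure (subset_insert _ _) (insert_subset hpcl subset_closure)
  have : A ∪ B = A ∪ insert p B := by
    ext z; constructor
    · rintro (h | h)
      · exact Or.inl h
      · exact Or.inr (Or.inr h)
    · rintro (h | rfl | h)
      · exact Or.inl h
      · exact Or.inl hpA
      · exact Or.inr h
  rw [this]
  exact hAp.union p hpA (mem_insert _ _) hBp'

lemma C_improve {D : Set ℂ} (hD : Gd D) (h0 : (0:ℂ) ∈ D) {w : ℂ} (hw : ‖w‖ < 1) (hwD : w ∉ D) :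
    ∃ h k : ℂ → ℂ, DifferentiableOn ℂ h D ∧ (DifferentiableOn ℂ k (ball 0 1) ∧ ∀ y ∈ D, k (h y) = y) ∧ Gd (h '' D) ∧ h 0 = 0 ∧
      ‖deriv h 0‖ = (1 + ‖w‖) / (2 * √‖w‖) := by
  have hDn : ∀ y ∈ D, ‖y‖ < 1 := fun y hy => by simpa using hD.2.1 hy
  have hD1 := mob_gd hw hD
  have h01 : (0:ℂ) ∉ mob w '' D := by
    rintro ⟨y, hy, hyw⟩
    rw [mob, div_eq_zero_iff] at hyw
    rcases hyw with h | h
    · rw [sub_eq_zero] at h; rw [h] at hy; exact hwD hy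
    · exact mob_den hw (hDn y hy).le h
  obtain ⟨s, hs, hsq⟩ := C_sqrt hD1.1 hD1.2.1 rfl hD1.2.2.2 ⟨by simp, h01⟩
  have hD2 := sqrt_gd hD1 h01 hs hsq (Set.Nonempty.image _ ⟨0, h0⟩)
  have hsd : ∀ y ∈ mob w '' D, HasDerivAt s (2 * s y)⁻¹ y := by
    intro y hy
    apply HasDerivAt.of_local_left_inverse (f := fun z => z ^ 2) (hs.continuousAt (hD1.1.mem_nhds hy))
    · simpa using hasDerivAt_pow 2 (s y)
    · intro h
      have h5 : s y = 0 := by simpa using h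
      have := hsq y hy
      rw [h5] at this
      apply h01
      rw [← this] at hy
      simpa using hy
    · filter_upwards [hD1.1.mem_nhds hy] with z hz using hsq z hz
  set β := s (mob w 0) with hβ
  have hm0 : mob w 0 = -w := by simp [mob]
  have hβ2 : β ^ 2 = -w := by rw [hβ, hsq _ ⟨0, h0, rfl⟩, hm0]
  have hβ1 : ‖β‖ < 1 := by
    have := hD2.2.1 ⟨_, ⟨0, h0, rfl⟩, rfl⟩
    simpa using this
  have hβw : ‖β‖ ^ 2 = ‖w‖ := by rw [← norm_pow, hβ2, norm_neg]
  have hd : ∀ y ∈ D, HasDerivAt (fun y => mob β (s (mob w y))) ((1 - conj β * β) / (1 - conj β * s (mob w y)) ^ 2 * ((2 * s (mob w y))⁻¹ * ((1 - conj w * w) / (1 - conj w * y) ^ 2))) y := by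
    intro y hy
    have e1 := mob_deriv hw (hDn y hy).le
    have e2 := (hsd (mob w y) ⟨y, hy, rfl⟩).comp y e1
    have e3 : ‖s (mob w y)‖ ≤ 1 := by
      have := hD2.2.1 ⟨_, ⟨y, hy, rfl⟩, rfl⟩
      simp at this
      exact this.le
    exact (mob_deriv hβ1 e3).comp y e2
  have himg : (fun y => mob β (s (mob w y))) '' D = mob β '' (s '' (mob w '' D)) := by
    simp only [image_image]
  refine ⟨fun y => mob β (s (mob w y)), fun y => mob (-w) (mob (-β) y ^ 2), fun y hy => (hd y hy).differentiableAt.differentiableWithinAt, ⟨?_, ?_⟩, ?_, ?_, ?_⟩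
  · intro y hy
    have hy1 : ‖y‖ < 1 := by simpa using hy
    have hβ' : ‖-β‖ < 1 := by simpa using hβ1
    have e1 := (mob_deriv hβ' hy1.le).differentiableAt.pow 2
    have e2 : ‖mob (-β) y ^ 2‖ ≤ 1 := by
      rw [norm_pow]; exact pow_le_one₀ (norm_nonneg _) (mob_le hβ' hy1.le)
    exact (DifferentiableAt.comp y (mob_deriv (w := -w) (by simpa using hw) e2).differentiableAt e1).differentiableWithinAt
  · intro y hy
    have hy' : ‖s (mob w y)‖ ≤ 1 := by
      have := hD2.2.1 ⟨_, ⟨y, hy, rfl⟩, rfl⟩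
      simp at this
      exact this.le
    simp only
    rw [mob_inv hβ1 hy', hsq _ ⟨y, hy, rfl⟩, mob_inv hw (hDn y hy).le]
  · rw [himg]; exact mob_gd hβ1 hD2
  · show mob β β = 0
    simp [mob]
  · rw [(hd 0 h0).deriv, ← hβ]
    have hw0 : w ≠ 0 := fun h => hwD (h ▸ h0)
    have hβ0 : β ≠ 0 := by
      intro h; rw [h] at hβ2; apply hw0; simpa using hβ2
    have hbp : 0 < ‖β‖ := norm_pos_iff.2 hβ0
    have e1 : conj β * β = ((‖β‖ ^ 2 : ℝ) : ℂ) := by rw [mul_comm, Complex.mul_conj, Complex.normSq_eq_norm_sq]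
    have e2 : conj w * w = ((‖w‖ ^ 2 : ℝ) : ℂ) := by rw [mul_comm, Complex.mul_conj, Complex.normSq_eq_norm_sq]
    have hsqrt : √‖w‖ = ‖β‖ := by rw [← hβw, Real.sqrt_sq hbp.le]
    rw [hsqrt, e1, e2, ← Complex.ofReal_one, ← Complex.ofReal_sub, ← Complex.ofReal_sub]
    have e3 : (0:ℝ) < 1 - ‖β‖ ^ 2 := by nlinarith
    have e4 : (0:ℝ) < 1 - ‖w‖ ^ 2 := by nlinarith [norm_nonneg w]
    simp only [norm_mul, norm_div, norm_pow, norm_inv, Complex.norm_real, Real.norm_eq_abs, abs_of_pos e3, abs_of_pos e4]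
    simp only [mul_zero, sub_zero, Complex.ofReal_one, norm_one, one_pow, div_one, Complex.norm_ofNat]
    rw [← hβw] at e4 ⊢
    field_simp
    ring
end

section
open Set Metric Filter Topology
open scoped ComplexConjugate

lemma ul_loc {l : Filter ℕ} {F : ℕ → ℂ → ℂ} {f : ℂ → ℂ} {V : Set ℂ} (hV : IsOpen V) [l.NeBot]
    (h : ∀ᶠ n in l, DifferentiableOn ℂ (F n) V ∧ ∀ x ∈ V, ‖F n x‖ ≤ 1)
    (hlim : ∀ x ∈ V, Tendsto (fun n => F n x) l (𝓝 (f x))) :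
    TendstoLocallyUniformlyOn F f l V := by
  rw [Metric.tendstoLocallyUniformlyOn_iff]
  intro ε hε x hx
  obtain ⟨r, hr, hrV⟩ := Metric.isOpen_iff.1 hV x hx
  have key : ∀ᶠ n in l, ∀ y ∈ ball x r, dist (F n y) (F n x) ≤ 2 / r * dist y x := by
    filter_upwards [h] with n hn y hy
    apply Complex.dist_le_div_mul_dist_of_mapsTo_ball (hn.1.mono hrV) _ hy
    intro z hz
    rw [mem_closedBall, dist_eq_norm]
    have h1 := hn.2 z (hrV hz)
    have h2 := hn.2 x hx
    linarith [norm_sub_le (F n z) (F n x)]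
  have key2 : ∀ y ∈ ball x r, dist (f y) (f x) ≤ 2 / r * dist y x := by
    intro y hy
    refine le_of_tendsto ((hlim y (hrV hy)).dist (hlim x hx)) ?_
    filter_upwards [key] with n hn using hn y hy
  refine ⟨ball x (min r (ε * r / 8)), mem_nhdsWithin_of_mem_nhds (ball_mem_nhds _ (by positivity)), ?_⟩
  have h3 : ∀ᶠ n in l, dist (F n x) (f x) < ε / 4 := (Metric.tendsto_nhds.1 (hlim x hx)) _ (by positivity)
  filter_upwards [key, h3] with n hn hn3 y hy
  have hy1 : y ∈ ball x r := ball_subset_ball (min_le_left _ _) hy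
  have hy2 : dist y x < ε * r / 8 := lt_of_lt_of_le hy (min_le_right _ _)
  have e1 := hn y hy1
  have e2 := key2 y hy1
  have e3 : 2 / r * dist y x ≤ ε / 4 := by
    calc 2 / r * dist y x ≤ 2 / r * (ε * r / 8) := by gcongr
      _ = ε / 4 := by field_simp; ring
  calc dist (f y) (F n y) ≤ dist (f y) (f x) + dist (f x) (F n x) + dist (F n x) (F n y) := dist_triangle4 _ _ _ _
    _ < ε := by rw [dist_comm (f x), dist_comm (F n x) (F n y)]; linarith

lemma ul_ex {F : ℕ → ℂ} (l : Ultrafilter ℕ) (h : ∀ᶠ n in l, ‖F n‖ ≤ 1) : ∃ y, Tendsto F l (𝓝 y) ∧ ‖y‖ ≤ 1 := by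
  have hc : IsCompact (closedBall (0:ℂ) 1) := isCompact_closedBall _ _
  obtain ⟨y, hy, hy'⟩ := hc.ultrafilter_le_nhds (l.map F) (by
    simp only [Ultrafilter.coe_map, le_principal_iff, mem_map]
    filter_upwards [h] with n hn
    simpa using hn)
  exact ⟨y, hy', by simpa using hy⟩

lemma hurw {l : Filter ℕ} [l.NeBot] {F : ℕ → ℂ → ℂ} {g : ℂ → ℂ} {b : ℂ}
    (hg : DifferentiableOn ℂ g (ball 0 1)) (hgb : g 0 ≠ b)
    (hloc : ∀ r < 1, ∀ᶠ n in l, DifferentiableOn ℂ (F n) (ball 0 r) ∧ ∀ x ∈ ball 0 r, F n x ≠ b)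
    (ht : ∀ r < 1, TendstoLocallyUniformlyOn F g l (ball 0 r)) : ∀ z ∈ ball 0 1, g z ≠ b := by
  intro z hz hzb
  have hgn : AnalyticOnNhd ℂ g (ball 0 1) := hg.analyticOnNhd isOpen_ball
  have hev : ∀ᶠ y in 𝓝[≠] z, g y ≠ b := by
    by_contra hcon
    have hfr : ∃ᶠ y in 𝓝[≠] z, g y = b := by
      rw [not_eventually] at hcon
      exact hcon.mono fun y hy => not_not.1 hy
    have := hgn.eqOn_of_preconnected_of_frequently_eq (analyticOnNhd_const (v := b)) (convex_ball _ _).isPreconnected hz hfr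
    exact hgb (this (by simp))
  rw [eventually_nhdsWithin_iff, Metric.eventually_nhds_iff] at hev
  obtain ⟨r₁, hr₁, hev⟩ := hev
  have hz1 : ‖z‖ < 1 := by simpa using hz
  obtain ⟨ρ, hρ1, hρ2⟩ := exists_between hz1
  set r := min (r₁ / 2) ((ρ - ‖z‖) / 2) with hr
  have hr0 : 0 < r := lt_min (by positivity) (by linarith)
  have hrr : r < r₁ := lt_of_le_of_lt (min_le_left _ _) (by linarith)
  have hsub : closedBall z r ⊆ ball 0 ρ := by
    apply closedBall_subset_ball'
    have := min_le_right (r₁ / 2) ((ρ - ‖z‖) / 2)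
    rw [dist_zero_right]; linarith
  have hsub1 : closedBall z r ⊆ ball 0 1 := hsub.trans (ball_subset_ball hρ2.le)
  obtain ⟨δ, hδ, hδs⟩ : ∃ δ > 0, ∀ y ∈ sphere z r, δ ≤ ‖g y - b‖ := by
    have hc : ContinuousOn (fun y => ‖g y - b‖) (sphere z r) :=
      ((hg.continuousOn.mono (sphere_subset_closedBall.trans hsub1)).sub continuousOn_const).norm
    refine (isCompact_sphere z r).exists_forall_le' hc (a := 0) ?_
    intro y hy
    apply norm_pos_iff.2 (sub_ne_zero.2 _)
    have hyd : dist y z = r := hy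
    apply hev (by rw [hyd]; exact hrr)
    intro h
    rw [h, dist_self] at hyd
    exact hr0.ne hyd
  have hu : TendstoUniformlyOn F g l (closedBall z r) :=
    (tendstoLocallyUniformlyOn_iff_tendstoUniformlyOn_of_compact (isCompact_closedBall _ _)).1 ((ht ρ hρ2).mono hsub)
  have hu2 := Metric.tendstoUniformlyOn_iff.1 hu (δ / 2) (by positivity)
  obtain ⟨n, hn1, hn2, hn3⟩ := (hu2.and (hloc ρ hρ2)).exists
  have hd : DiffContOnCl ℂ (fun y => (F n y - b)⁻¹) (ball z r) := by
    apply DifferentiableOn.diffContOnCl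
    rw [closure_ball _ hr0.ne']
    exact ((hn2.mono hsub).sub_const b).inv (fun y hy => sub_ne_zero.2 (hn3 y (hsub hy)))
  have hmax : ‖(F n z - b)⁻¹‖ ≤ 2 / δ := by
    apply Complex.norm_le_of_forall_mem_frontier_norm_le isBounded_ball hd _ (subset_closure (mem_ball_self hr0))
    intro y hy
    rw [frontier_ball _ hr0.ne'] at hy
    rw [norm_inv, inv_le_comm₀ (norm_pos_iff.2 (sub_ne_zero.2 (hn3 y (hsub (sphere_subset_closedBall hy))))) (by positivity), inv_div]
    have h1 := hδs y hy
    have h2 := hn1 y (sphere_subset_closedBall hy)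
    rw [dist_eq_norm] at h2
    have : ‖g y - b‖ ≤ ‖g y - F n y‖ + ‖F n y - b‖ := norm_sub_le_norm_sub_add_norm_sub _ _ _
    linarith
  have hzz : z ∈ closedBall z r := mem_closedBall_self hr0.le
  rw [norm_inv, inv_le_comm₀ (norm_pos_iff.2 (sub_ne_zero.2 (hn3 z (hsub hzz)))) (by positivity), inv_div] at hmax
  have h2 := hn1 z hzz
  rw [hzb, dist_comm, dist_eq_norm] at h2
  linarith

def Cls (U : Set ℂ) (f g : ℂ → ℂ) : Prop := DifferentiableOn ℂ f U ∧ DifferentiableOn ℂ g (f '' U) ∧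
  (∀ x ∈ U, g (f x) = x) ∧ Gd (f '' U) ∧ f 0 = 0

lemma cls_big {U : Set ℂ} (hU : Gd U) (h0 : (0:ℂ) ∈ U) {ρ : ℝ} (hρ0 : 0 < ρ) (hρ : ρ < 1) :
    ∃ f g, Cls U f g ∧ ball 0 ρ ⊆ f '' U := by
  obtain ⟨r, hr, hrU⟩ := Metric.isOpen_iff.1 hU.1 0 h0
  have hid : Cls U id id := by
    refine ⟨differentiableOn_id, differentiableOn_id, fun _ _ => rfl, ?_, rfl⟩
    rw [image_id]; exact hU
  set S := {x : ℝ | ∃ f g, Cls U f g ∧ x = ‖deriv f 0‖} with hS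
  have hSne : S.Nonempty := ⟨_, id, id, hid, rfl⟩
  have hSb : BddAbove S := by
    refine ⟨1 / r, ?_⟩
    rintro _ ⟨f, g, hf, rfl⟩
    apply Complex.norm_deriv_le_div_of_mapsTo_ball (hf.1.mono hrU) _ hr
    intro z hz
    rw [hf.2.2.2.2]
    exact ball_subset_closedBall (hf.2.2.2.1.2.1 ⟨z, hrU hz, rfl⟩)
  have h1S : (1:ℝ) ∈ S := ⟨id, id, hid, by simp⟩
  have hM1 : 1 ≤ sSup S := le_csSup hSb h1S
  set κ := (1 + ρ) / (2 * √ρ) with hκ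
  have hsρ : 0 < √ρ := Real.sqrt_pos.2 hρ0
  have hsρ1 : √ρ < 1 := by rw [Real.sqrt_lt' one_pos]; simpa using hρ
  have hκ1 : 1 < κ := by
    rw [hκ, one_lt_div (by positivity)]
    nlinarith [Real.sq_sqrt hρ0.le]
  obtain ⟨x, ⟨f, g, hf, rfl⟩, hx⟩ := exists_lt_of_lt_csSup hSne (show sSup S / κ < sSup S from div_lt_self (by linarith) hκ1)
  refine ⟨f, g, hf, ?_⟩
  intro w hw
  by_contra hwU
  have hw1 : ‖w‖ < ρ := by simpa using hw
  obtain ⟨f1, f2, f3, f4, f5⟩ := hf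
  have h0f : (0:ℂ) ∈ f '' U := ⟨0, h0, f5⟩
  obtain ⟨h, k, hh1, ⟨hk1, hk2⟩, hh3, hh4, hh5⟩ := C_improve f4 h0f (hw1.trans hρ) hwU
  have hw0 : 0 < ‖w‖ := norm_pos_iff.2 (fun h => hwU (h ▸ h0f))
  have hcls : Cls U (h ∘ f) (g ∘ k) := by
    refine ⟨hh1.comp f1 (mapsTo_image _ _), ?_, ?_, ?_, ?_⟩
    · rw [image_comp]
      apply f2.comp (hk1.mono hh3.2.1)
      rintro _ ⟨y, hy, rfl⟩
      rw [hk2 y hy]; exact hy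
    · intro x hx
      simp only [Function.comp]
      rw [hk2 _ ⟨x, hx, rfl⟩, f3 x hx]
    · rw [image_comp]; exact hh3
    · simp [f5, hh4]
  have hle := le_csSup hSb (show ‖deriv (h ∘ f) 0‖ ∈ S from ⟨_, _, hcls, rfl⟩)
  have hdc : deriv (h ∘ f) 0 = deriv h 0 * deriv f 0 := by
    rw [deriv_comp, f5]
    · rw [f5]; exact (hh1.differentiableAt (f4.1.mem_nhds h0f))
    · exact f1.differentiableAt (hU.1.mem_nhds h0)
  rw [hdc, norm_mul, hh5] at hle
  have hkk : κ ≤ (1 + ‖w‖) / (2 * √‖w‖) := by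
    have hsw : 0 < √‖w‖ := Real.sqrt_pos.2 hw0
    have hle' : √‖w‖ ≤ √ρ := Real.sqrt_le_sqrt hw1.le
    rw [hκ, div_le_div_iff₀ (by positivity) (by positivity)]
    have e1 := Real.sq_sqrt hρ0.le
    have e2 := Real.sq_sqrt hw0.le
    generalize √‖w‖ = s at *
    generalize √ρ = t at *
    rw [← e1, ← e2]
    nlinarith [mul_nonneg (sub_nonneg.2 hle') (show 0 ≤ 1 - s * t by nlinarith)]
  rw [div_lt_iff₀ (by linarith)] at hx
  have : κ * ‖deriv f 0‖ ≤ (1 + ‖w‖) / (2 * √‖w‖) * ‖deriv f 0‖ := by gcongr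
  linarith

theorem RMT0 {U : Set ℂ} (hU : Gd U) (h0 : (0:ℂ) ∈ U) :
    ∃ φ ψ : ℂ → ℂ, DifferentiableOn ℂ φ (ball 0 1) ∧ DifferentiableOn ℂ ψ U ∧ MapsTo φ (ball 0 1) U ∧
      MapsTo ψ U (ball 0 1) ∧ (∀ z ∈ ball 0 1, ψ (φ z) = z) ∧ (∀ x ∈ U, φ (ψ x) = x) ∧ φ 0 = 0 := by
  have hex : ∀ n : ℕ, ∃ f g, Cls U f g ∧ ball 0 (1 - 1 / ((n:ℝ) + 2)) ⊆ f '' U := by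
    intro n
    have : (1:ℝ) / ((n:ℝ) + 2) < 1 := by rw [div_lt_one (by positivity)]; linarith [n.cast_nonneg (α := ℝ)]
    apply cls_big hU h0 (by linarith)
    have : (0:ℝ) < 1 / ((n:ℝ) + 2) := by positivity
    linarith
  choose F G hFG hball using hex
  set l : Ultrafilter ℕ := hyperfilter ℕ with hl
  have hlt : (l : Filter ℕ) ≤ atTop := by
    rw [← Nat.cofinite_eq_atTop]; exact hyperfilter_le_cofinite
  have hFn : ∀ n, ∀ x ∈ U, ‖F n x‖ < 1 := by
    intro n x hx
    have := (hFG n).2.2.2.1.2.1 ⟨x, hx, rfl⟩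
    simpa using this
  have hGmap : ∀ n, MapsTo (G n) (F n '' U) U := by
    rintro n _ ⟨x, hx, rfl⟩
    rw [(hFG n).2.2.1 x hx]; exact hx
  have hUn : ∀ x ∈ U, ‖x‖ < 1 := fun x hx => by simpa using hU.2.1 hx
  have hbig : ∀ r < 1, ∀ᶠ n in (l : Filter ℕ), ball 0 r ⊆ F n '' U := by
    intro r hr
    apply hlt
    have ht : Tendsto (fun n : ℕ => (1:ℝ) / ((n:ℝ) + 2)) atTop (𝓝 0) := by
      have := (tendsto_one_div_add_atTop_nhds_zero_nat (𝕜 := ℝ)).comp (tendsto_add_atTop_nat 1)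
      refine this.congr fun n => ?_
      simp only [Function.comp]; push_cast; ring
    filter_upwards [ht.eventually_lt_const (show (0:ℝ) < 1 - r by linarith)] with n hn
    exact (ball_subset_ball (by linarith)).trans (hball n)
  have hFG' : ∀ n, ∀ z ∈ F n '' U, F n (G n z) = z := by
    rintro n _ ⟨x, hx, rfl⟩
    rw [(hFG n).2.2.1 x hx]
  have hflim : ∀ x, ∃ y, x ∈ U → Tendsto (fun n => F n x) l (𝓝 y) ∧ ‖y‖ ≤ 1 := by
    intro x
    by_cases hx : x ∈ U
    · obtain ⟨y, hy⟩ := ul_ex (F := fun n => F n x) l (Eventually.of_forall fun n => (hFn n x hx).le)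
      exact ⟨y, fun _ => hy⟩
    · exact ⟨0, fun h => absurd h hx⟩
  choose f hf using hflim
  have hGev : ∀ r < 1, ∀ᶠ n in (l : Filter ℕ), DifferentiableOn ℂ (G n) (ball 0 r) ∧ ∀ x ∈ ball 0 r, ‖G n x‖ ≤ 1 := by
    intro r hr
    filter_upwards [hbig r hr] with n hn
    exact ⟨(hFG n).2.1.mono hn, fun x hx => (hUn _ (hGmap n (hn hx))).le⟩
  have hglim : ∀ x, ∃ y, x ∈ ball (0:ℂ) 1 → Tendsto (fun n => G n x) l (𝓝 y) ∧ ‖y‖ ≤ 1 := by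
    intro x
    by_cases hx : x ∈ ball (0:ℂ) 1
    · obtain ⟨r, hr1, hr2⟩ := exists_between (mem_ball_zero_iff.1 hx)
      obtain ⟨y, hy⟩ := ul_ex (F := fun n => G n x) l (by
        filter_upwards [hGev r hr2] with n hn using hn.2 x (by simpa using hr1))
      exact ⟨y, fun _ => hy⟩
    · exact ⟨0, fun h => absurd h hx⟩
  choose g hg using hglim
  have hft : TendstoLocallyUniformlyOn F f l U :=
    ul_loc hU.1 (Eventually.of_forall fun n => ⟨(hFG n).1, fun x hx => (hFn n x hx).le⟩) (fun x hx => (hf x hx).1)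
  have hfd : DifferentiableOn ℂ f U := hft.differentiableOn (Eventually.of_forall fun n => (hFG n).1) hU.1
  have hgt : ∀ r < 1, TendstoLocallyUniformlyOn G g l (ball 0 r) := fun r hr =>
    ul_loc isOpen_ball (hGev r hr) (fun x hx => (hg x (ball_subset_ball hr.le hx)).1)
  have hgdr : ∀ r < 1, DifferentiableOn ℂ g (ball 0 r) := fun r hr =>
    (hgt r hr).differentiableOn ((hGev r hr).mono fun n hn => hn.1) isOpen_ball
  have hgd : DifferentiableOn ℂ g (ball 0 1) := by
    intro x hx
    obtain ⟨r, hr1, hr2⟩ := exists_between (mem_ball_zero_iff.1 hx)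
    exact ((hgdr r hr2).differentiableAt (isOpen_ball.mem_nhds (by simpa using hr1))).differentiableWithinAt
  have hf0 : f 0 = 0 := by
    refine tendsto_nhds_unique (hf 0 h0).1 ?_
    simp only [(hFG _).2.2.2.2]
    exact tendsto_const_nhds
  have hG0 : ∀ n, G n 0 = 0 := fun n => by
    have := (hFG n).2.2.1 0 h0
    rwa [(hFG n).2.2.2.2] at this
  have hg0 : g 0 = 0 := by
    refine tendsto_nhds_unique (hg 0 (by simp)).1 ?_
    simp only [hG0]
    exact tendsto_const_nhds
  have hfmap : MapsTo f U (ball 0 1) := by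
    intro x hx
    rw [mem_ball_zero_iff]
    refine lt_of_le_of_ne (hf x hx).2 fun h1 => ?_
    have := Complex.norm_eqOn_of_isPreconnected_of_isMaxOn hU.2.2.1 hU.1 hfd hx (fun y hy => by
      show ‖f y‖ ≤ ‖f x‖; rw [h1]; exact (hf y hy).2)
    have := this h0
    simp [hf0, h1] at this
  have hgmap : MapsTo g (ball 0 1) U := by
    intro z hz
    by_contra hzU
    refine hurw (b := g z) (F := G) hgd ?_ ?_ hgt z hz rfl
    · rw [hg0]; rintro h; rw [← h] at hzU; exact hzU h0
    · intro r hr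
      filter_upwards [hGev r hr, hbig r hr] with n hn hn2
      refine ⟨hn.1, fun x hx h => hzU ?_⟩
      rw [← h]; exact hGmap n (hn2 hx)
  refine ⟨g, f, hgd, hfd, hgmap, hfmap, ?_, ?_, hg0⟩
  · intro z hz
    obtain ⟨r, hr1, hr2⟩ := exists_between (mem_ball_zero_iff.1 hz)
    have h1 : Tendsto (fun n => F n (G n z)) l (𝓝 (f (g z))) := by
      refine tendsto_comp_of_locally_uniform_limit_within (s := U) (hfd.continuousOn _ (hgmap hz)) ?_ ?_
      · refine tendsto_nhdsWithin_iff.2 ⟨(hg z hz).1, ?_⟩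
        filter_upwards [hbig r hr2] with n hn using hGmap n (hn (by simpa using hr1))
      · intro u hu
        exact hft u hu _ (hgmap hz)
    refine tendsto_nhds_unique h1 (tendsto_const_nhds.congr' ?_)
    filter_upwards [hbig r hr2] with n hn using (hFG' n z (hn (by simpa using hr1))).symm
  · intro x hx
    obtain ⟨r, hr1, hr2⟩ := exists_between (mem_ball_zero_iff.1 (hfmap hx))
    have hfr : f x ∈ ball (0:ℂ) r := by simpa using hr1
    have h1 : Tendsto (fun n => G n (F n x)) l (𝓝 (g (f x))) := by
      refine tendsto_comp_of_locally_uniform_limit_within (s := ball 0 r) (hgd.continuousOn.mono (ball_subset_ball hr2.le) _ hfr) ?_ ?_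
      · refine tendsto_nhdsWithin_iff.2 ⟨(hf x hx).1, ?_⟩
        exact (hf x hx).1.eventually (isOpen_ball.mem_nhds hfr)
      · intro u hu
        exact hgt r hr2 u hu _ hfr
    refine tendsto_nhds_unique h1 (tendsto_const_nhds.congr fun n => ((hFG n).2.2.1 x hx).symm)
end

section
open Set Metric Filter Topology
open scoped NNReal

lemma idLip {E : Type*} [NormedAddCommGroup E] [NormedSpace ℝ E] [FiniteDimensional ℝ E] {e : E → E}
    (he : ContDiff ℝ (⊤:ℕ∞) e) (hl : LipschitzWith (1/2) e) :
    ∃ g : E → E, ContDiff ℝ (⊤:ℕ∞) g ∧ (∀ x, g (x + e x) = x) ∧ (∀ y, g y + e (g y) = y) := by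
  have : CompleteSpace E := FiniteDimensional.complete ℝ E
  set f : E → E := fun x => x + e x with hf
  have hlow : ∀ x y, dist x y ≤ 2 * dist (f x) (f y) := by
    intro x y
    have h1 := hl.dist_le_mul x y
    have h2 : dist x y ≤ dist (f x) (f y) + dist (e x) (e y) := by
      rw [dist_eq_norm, dist_eq_norm, dist_eq_norm]
      have : x - y = (f x - f y) - (e x - e y) := by simp only [hf]; abel
      rw [this]; exact norm_sub_le _ _
    push_cast at h1
    linarith
  have hfc : ContDiff ℝ (⊤:ℕ∞) f := contDiff_id.add he
  have hinj : Function.Injective f := by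
    intro x y hxy
    have := hlow x y
    rw [hxy, dist_self, mul_zero] at this
    exact dist_le_zero.1 this
  have hsurj : Function.Surjective f := by
    intro y
    have hc : ContractingWith (1/2) (fun x => y - e x) := by
      refine ⟨by rw [← NNReal.coe_lt_coe]; norm_num, ?_⟩
      apply LipschitzWith.of_dist_le_mul
      intro a b
      rw [dist_sub_left]
      exact hl.dist_le_mul a b
    have := hc.fixedPoint_isFixedPt
    refine ⟨hc.fixedPoint, ?_⟩
    have h2 : y - e (hc.fixedPoint) = hc.fixedPoint := this
    simp only [hf]
    nth_rewrite 1 [← h2]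
    abel
  set q := Equiv.ofBijective f ⟨hinj, hsurj⟩ with hq
  have hgc : Continuous q.symm := by
    have : LipschitzWith 2 q.symm := by
      apply LipschitzWith.of_dist_le_mul
      intro a b
      have := hlow (q.symm a) (q.symm b)
      have e1 : ∀ y, f (q.symm y) = y := fun y => q.apply_symm_apply y
      rw [e1, e1] at this
      simpa using this
    exact this.continuous
  let hom : E ≃ₜ E := ⟨q, hfc.continuous, hgc⟩
  have hder : ∀ x, ∃ L : E ≃L[ℝ] E, HasFDerivAt f (L : E →L[ℝ] E) x := by
    intro x
    have hd : HasFDerivAt f (ContinuousLinearMap.id ℝ E + fderiv ℝ e x) x :=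
      (hasFDerivAt_id x).add (he.differentiable (by simp) x).hasFDerivAt
    have hn : ‖-fderiv ℝ e x‖ < 1 := by
      rw [norm_neg]
      refine lt_of_le_of_lt (norm_fderiv_le_of_lipschitz ℝ hl) ?_
      norm_num
    refine ⟨ContinuousLinearEquiv.ofUnit (Units.oneSub (-fderiv ℝ e x) hn), ?_⟩
    convert hd using 1
    ext v
    simp [ContinuousLinearEquiv.ofUnit, Units.oneSub]
  choose L hL using hder
  refine ⟨hom.symm, hom.contDiff_symm hL hfc, fun x => q.symm_apply_apply x, fun y => q.apply_symm_apply y⟩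

lemma bump_bd {E : Type*} [NormedAddCommGroup E] [InnerProductSpace ℝ E] [FiniteDimensional ℝ E] :
    ∃ b : E → ℝ, ∃ C : ℝ, ContDiff ℝ (⊤:ℕ∞) b ∧ (∀ x, ‖x‖ ≤ 1 → b x = 1) ∧ (∀ x, 2 ≤ ‖x‖ → b x = 0) ∧ (∀ x, |b x| ≤ 1) ∧
      (∀ x, ‖fderiv ℝ b x‖ ≤ C) ∧ 0 < C := by
  let B : ContDiffBump (0:E) := ⟨1, 2, by norm_num, by norm_num⟩
  have hc : ContDiff ℝ (⊤:ℕ∞) B := B.contDiff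
  obtain ⟨C, hC⟩ := (hc.continuous_fderiv (by simp)).bounded_above_of_compact_support (B.hasCompactSupport.fderiv ℝ)
  refine ⟨B, max C 1, hc, ?_, ?_, ?_, fun x => (hC x).trans (le_max_left _ _), by positivity⟩
  · intro x hx
    exact B.one_of_mem_closedBall (by simpa [B] using hx)
  · intro x hx
    exact B.zero_of_le_dist (by simpa [B] using hx)
  · intro x
    rw [abs_of_nonneg B.nonneg]; exact B.le_one

lemma loc_pert {h : ℂ → ℂ} {r₀ : ℝ} (hr₀ : 0 < r₀) (hh : ContDiffOn ℝ (⊤:ℕ∞) h (ball 0 r₀)) (h0 : h 0 = 0)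
    (hd0 : fderiv ℝ h 0 = 0) : ∃ e : ℂ → ℂ, ∃ δ > 0, ContDiff ℝ (⊤:ℕ∞) e ∧ LipschitzWith (1/2) e ∧
      (∀ x, ‖x‖ < δ → e x = h x) ∧ (∀ x, r₀ ≤ ‖x‖ → e x = 0) := by
  obtain ⟨b, C, hb, hb1, hb0, hbl, hbC, hC⟩ := bump_bd (E := ℂ)
  have hcd : ContinuousOn (fderiv ℝ h) (ball 0 r₀) := hh.continuousOn_fderiv_of_isOpen isOpen_ball (by simp)
  have hcat : ContinuousAt (fderiv ℝ h) 0 := hcd.continuousAt (isOpen_ball.mem_nhds (by simpa using hr₀))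
  set ε := 1 / (2 * (2 * C + 1)) with hε
  have hεp : 0 < ε := by positivity
  obtain ⟨r₁, hr₁, hr₁'⟩ := Metric.continuousAt_iff.1 hcat ε hεp
  set r := min r₀ r₁ / 4 with hr
  have hrp : 0 < r := by have := lt_min hr₀ hr₁; positivity
  have hra : 4 * r ≤ r₀ := by rw [hr]; linarith [min_le_left r₀ r₁]
  have hrb : 4 * r ≤ r₁ := by rw [hr]; linarith [min_le_right r₀ r₁]
  have hdb : ∀ x, ‖x‖ < 4 * r → ‖fderiv ℝ h x‖ ≤ ε := by
    intro x hx
    have := hr₁' (x := x) (by simpa using lt_of_lt_of_le hx hrb)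
    rw [hd0, dist_zero_right] at this
    exact this.le
  have hdiff : ∀ x, ‖x‖ < 4 * r → DifferentiableAt ℝ h x := by
    intro x hx
    exact (hh.differentiableOn (by simp)).differentiableAt (isOpen_ball.mem_nhds (by simpa using lt_of_lt_of_le hx hra))
  have hhb : ∀ x, ‖x‖ < 4 * r → ‖h x‖ ≤ ε * ‖x‖ := by
    intro x hx
    have := (convex_ball (0:ℂ) (4 * r)).norm_image_sub_le_of_norm_fderiv_le (𝕜 := ℝ) (f := h) (C := ε) (x := 0) (y := x)
      (fun y hy => hdiff y (by simpa using hy)) (fun y hy => hdb y (by simpa using hy)) (by simpa using hrp) (by simpa using hx)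
    simpa [h0] using this
  set e : ℂ → ℂ := fun x => b (r⁻¹ • x) • h x with he
  have hez : ∀ x, 2 * r ≤ ‖x‖ → e x = 0 := by
    intro x hx
    simp only [he]
    rw [hb0, zero_smul]
    rw [norm_smul, norm_inv, Real.norm_of_nonneg hrp.le, ← div_eq_inv_mul, le_div_iff₀ hrp]; exact hx
  have hes : ContDiff ℝ (⊤:ℕ∞) e := by
    rw [contDiff_iff_contDiffAt]
    intro x
    by_cases hx : ‖x‖ < 4 * r
    · have a1 : ContDiffAt ℝ (⊤:ℕ∞) (fun x : ℂ => b (r⁻¹ • x)) x := (hb.comp (contDiff_const_smul _)).contDiffAt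
      have a2 : ContDiffAt ℝ (⊤:ℕ∞) h x := hh.contDiffAt (isOpen_ball.mem_nhds (by simpa using lt_of_lt_of_le hx hra))
      exact a1.smul a2
    · have : e =ᶠ[𝓝 x] fun _ => 0 := by
        have ho : IsOpen {y : ℂ | 2 * r < ‖y‖} := isOpen_lt continuous_const continuous_norm
        filter_upwards [ho.mem_nhds (show 2 * r < ‖x‖ by linarith)] with y hy using hez y (le_of_lt hy)
      exact contDiffAt_const.congr_of_eventuallyEq this
  refine ⟨e, r, hrp, hes, ?_, ?_, ?_⟩
  · apply lipschitzWith_of_nnnorm_fderiv_le (𝕜 := ℝ) (hes.differentiable (by simp))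
    intro x
    rw [← NNReal.coe_le_coe, coe_nnnorm]
    push_cast
    by_cases hx : ‖x‖ ≤ 2 * r
    · have hx4 : ‖x‖ < 4 * r := by linarith
      have hb' : HasFDerivAt (fun x : ℂ => b (r⁻¹ • x)) ((fderiv ℝ b (r⁻¹ • x)).comp (r⁻¹ • ContinuousLinearMap.id ℝ ℂ)) x :=
        (hb.differentiable (by simp) _).hasFDerivAt.comp x ((hasFDerivAt_id x).const_smul r⁻¹)
      have := (hb'.smul (hdiff x hx4).hasFDerivAt).fderiv
      rw [show e = fun x => b (r⁻¹ • x) • h x from rfl]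
      erw [this]
      refine (norm_add_le _ _).trans ?_
      rw [norm_smul, Real.norm_eq_abs]
      have t1 : |b (r⁻¹ • x)| * ‖fderiv ℝ h x‖ ≤ 1 * ε :=
        mul_le_mul (hbl _) (hdb x hx4) (norm_nonneg _) zero_le_one
      have t2 : ‖(((fderiv ℝ b (r⁻¹ • x)).comp (r⁻¹ • ContinuousLinearMap.id ℝ ℂ)).smulRight (h x))‖ ≤ C * r⁻¹ * (ε * (2 * r)) := by
        rw [ContinuousLinearMap.norm_smulRight_apply]
        refine mul_le_mul ?_ ((hhb x hx4).trans (by gcongr)) (norm_nonneg _) (by positivity)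
        refine (ContinuousLinearMap.opNorm_comp_le _ _).trans ?_
        refine mul_le_mul (hbC _) ?_ (norm_nonneg _) hC.le
        rw [norm_smul, norm_inv, Real.norm_of_nonneg hrp.le]
        have := ContinuousLinearMap.norm_id_le (𝕜 := ℝ) (E := ℂ)
        calc r⁻¹ * _ ≤ r⁻¹ * 1 := by gcongr
          _ = _ := mul_one _
      have t3 : C * r⁻¹ * (ε * (2 * r)) = 2 * C * ε := by field_simp
      have t4 : 2 * C * ε + 1 * ε = 1 / 2 := by rw [hε]; field_simp
      linarith
    · have : e =ᶠ[𝓝 x] fun _ => 0 := by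
        have ho : IsOpen {y : ℂ | 2 * r < ‖y‖} := isOpen_lt continuous_const continuous_norm
        filter_upwards [ho.mem_nhds (show 2 * r < ‖x‖ by linarith)] with y hy using hez y (le_of_lt hy)
      rw [this.fderiv_eq]
      simp
  · intro x hx
    simp only [he]
    rw [hb1, one_smul]
    rw [norm_smul, norm_inv, Real.norm_of_nonneg hrp.le, ← div_eq_inv_mul, div_le_iff₀ hrp]; linarith
  · intro x hx
    exact hez x (by linarith)

def DD (S T : Set ℂ) (f g : ℂ → ℂ) : Prop := IsOpen S ∧ IsOpen T ∧ MapsTo f S T ∧ MapsTo g T S ∧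
  (∀ x ∈ S, g (f x) = x) ∧ (∀ y ∈ T, f (g y) = y) ∧ ContDiffOn ℝ (⊤:ℕ∞) f S ∧ ContDiffOn ℝ (⊤:ℕ∞) g T

lemma DD.symm {S T : Set ℂ} {f g : ℂ → ℂ} (h : DD S T f g) : DD T S g f := by
  obtain ⟨a, b, c, d, e, f, g, h⟩ := h
  exact ⟨b, a, d, c, f, e, h, g⟩

lemma DD.trans {S T R : Set ℂ} {f g f' g' : ℂ → ℂ} (h : DD S T f g) (h' : DD T R f' g') : DD S R (f' ∘ f) (g ∘ g') := by
  obtain ⟨a, b, c, d, e, f, g, h⟩ := h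
  obtain ⟨a', b', c', d', e', f', g', h'⟩ := h'
  refine ⟨a, b', c'.comp c, d.comp d', ?_, ?_, g'.comp g c, h.comp h' d'⟩
  · intro x hx
    simp only [Function.comp]; rw [e' _ (c hx), e x hx]
  · intro x hx
    simp only [Function.comp]; rw [f _ (d' hx), f' x hx]

lemma DD.restr {S T S' T' : Set ℂ} {f g : ℂ → ℂ} (h : DD S T f g) (hS : S' ⊆ S) (hT : T' ⊆ T) (hS' : IsOpen S')
    (hT' : IsOpen T') (hi : ∀ x ∈ S, x ∈ S' ↔ f x ∈ T') : DD S' T' f g := by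
  obtain ⟨a, b, c, d, e, f, g, h⟩ := h
  refine ⟨hS', hT', fun x hx => (hi x (hS hx)).1 hx, fun y hy => ?_, fun x hx => e x (hS hx), fun y hy => f y (hT hy), g.mono hS, h.mono hT⟩
  rw [hi _ (d (hT hy)), f y (hT hy)]; exact hy

lemma D_N {ρ : ℝ} (hρ : 0 < ρ) : ∃ f g : ℂ → ℂ, DD {0}ᶜ (closedBall 0 ρ)ᶜ f g ∧ (∃ R > 0, ∀ z, R ≤ ‖z‖ → f z = z) ∧
    ContinuousOn g {0}ᶜ ∧ ∀ z, ‖z‖ = ρ → g z = 0 := by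
  obtain ⟨b, C, hb, hb1, hb0, hbl, hbC, hC⟩ := bump_bd (E := ℝ)
  set L := 2 * ρ * C with hL
  have hLp : 0 < L := by positivity
  set e : ℝ → ℝ := fun t => ρ * b (L⁻¹ * t) with he
  have hes : ContDiff ℝ (⊤:ℕ∞) e := contDiff_const.mul (hb.comp (contDiff_const.mul contDiff_id))
  have hel : LipschitzWith (1/2) e := by
    have hbL : LipschitzWith (Real.toNNReal C) b := by
      apply lipschitzWith_of_nnnorm_fderiv_le (𝕜 := ℝ) (hb.differentiable (by simp))
      intro x
      rw [← NNReal.coe_le_coe, Real.coe_toNNReal _ hC.le]; exact hbC x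
    apply LipschitzWith.of_dist_le_mul
    intro x y
    have := hbL.dist_le_mul (L⁻¹ * x) (L⁻¹ * y)
    rw [Real.coe_toNNReal _ hC.le] at this
    simp only [he]
    rw [Real.dist_eq] at *
    rw [← mul_sub, abs_mul, abs_of_pos hρ]
    rw [Real.dist_eq, ← mul_sub, abs_mul, abs_of_pos (inv_pos.2 hLp)] at this
    push_cast
    rw [Real.dist_eq]
    calc ρ * |b (L⁻¹ * x) - b (L⁻¹ * y)| ≤ ρ * (C * (L⁻¹ * |x - y|)) := by gcongr
      _ = 1 / 2 * |x - y| := by rw [hL]; field_simp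
  obtain ⟨k, hk, hk1, hk2⟩ := idLip hes hel
  set n : ℝ → ℝ := fun t => t + e t with hn
  have hns : ContDiff ℝ (⊤:ℕ∞) n := contDiff_id.add hes
  have hmono : StrictMono n := by
    intro x y hxy
    have := hel.dist_le_mul x y
    rw [Real.dist_eq, Real.dist_eq] at this
    push_cast at this
    rw [abs_of_neg (show x - y < 0 by linarith)] at this
    have := neg_abs_le (e x - e y)
    have := le_abs_self (e x - e y)
    simp only [hn]
    linarith
  have hn0 : n 0 = ρ := by simp [hn, he, hb1]
  have hkρ : k ρ = 0 := by rw [← hn0]; exact hk1 0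
  have hk2' : ∀ y, n (k y) = y := hk2
  have hk1' : ∀ y, k (n y) = y := hk1
  have hkpos : ∀ t, ρ < t → 0 < k t := by
    intro t ht
    rw [← hmono.lt_iff_lt, hn0, hk2']; exact ht
  have hnpos : ∀ t, 0 < t → ρ < n t := by
    intro t ht
    rw [← hn0]; exact hmono ht
  have hsm : ∀ m : ℝ → ℝ, ContDiff ℝ (⊤:ℕ∞) m → ContDiffOn ℝ (⊤:ℕ∞) (fun z : ℂ => (m ‖z‖ / ‖z‖) • z) {0}ᶜ := by
    intro m hm z hz
    have hz0 : z ≠ 0 := hz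
    have hnorm : ContDiffAt ℝ (⊤:ℕ∞) (fun z : ℂ => ‖z‖) z := contDiffAt_norm ℝ hz0
    have h1 : ContDiffAt ℝ (⊤:ℕ∞) (fun z : ℂ => m ‖z‖ / ‖z‖) z :=
      (hm.contDiffAt.comp z hnorm).div hnorm (norm_ne_zero_iff.2 hz0)
    exact (h1.smul contDiffAt_id).contDiffWithinAt
  have hnm : ∀ c : ℝ, 0 ≤ c → ∀ z : ℂ, z ≠ 0 → ‖(c / ‖z‖) • z‖ = c := by
    intro c hc z hz
    have : 0 < ‖z‖ := norm_pos_iff.2 hz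
    rw [norm_smul, Real.norm_of_nonneg (by positivity)]
    field_simp
  have hT0 : ∀ z : ℂ, z ∈ (closedBall (0:ℂ) ρ)ᶜ → ρ < ‖z‖ := by
    intro z hz; simpa using hz
  have hTne : ∀ z : ℂ, ρ < ‖z‖ → z ≠ 0 := by
    rintro z hz rfl; simp at hz; linarith
  refine ⟨fun z => (n ‖z‖ / ‖z‖) • z, fun z => (k ‖z‖ / ‖z‖) • z, ⟨isOpen_compl_singleton, isClosed_closedBall.isOpen_compl, ?_, ?_, ?_, ?_, hsm n hns, (hsm k hk).mono ?_⟩, ?_, (hsm k hk).continuousOn, ?_⟩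
  · intro z hz
    have h1 := hnpos ‖z‖ (norm_pos_iff.2 hz)
    simp only [mem_compl_iff, mem_closedBall, dist_zero_right, not_le]
    rw [hnm _ (by linarith) z hz]; exact h1
  · intro z hz
    have h1 := hT0 z hz
    have h2 := hkpos _ h1
    have h3 := hnm _ h2.le z (hTne z h1)
    intro h
    simp only [mem_singleton_iff] at h
    rw [h, norm_zero] at h3
    linarith
  · intro z hz
    have h1 := hnpos ‖z‖ (norm_pos_iff.2 hz)
    have hz' : 0 < ‖z‖ := norm_pos_iff.2 hz
    simp only
    rw [hnm _ (by linarith) z hz, hk1', smul_smul]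
    have : ‖z‖ / n ‖z‖ * (n ‖z‖ / ‖z‖) = 1 := by
      have : n ‖z‖ ≠ 0 := by linarith
      field_simp
    rw [this, one_smul]
  · intro z hz
    have h1 := hT0 z hz
    have hz0 := hTne z h1
    have h2 := hkpos _ h1
    have hz' : 0 < ‖z‖ := norm_pos_iff.2 hz0
    simp only
    rw [hnm _ h2.le z hz0, hk2', smul_smul]
    have : ‖z‖ / k ‖z‖ * (k ‖z‖ / ‖z‖) = 1 := by
      field_simp
    rw [this, one_smul]
  · intro z hz
    exact hTne z (hT0 z hz)
  · refine ⟨2 * L, by positivity, fun z hz => ?_⟩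
    have hz' : 0 < ‖z‖ := by linarith
    have : n ‖z‖ = ‖z‖ := by
      simp only [hn, he]
      rw [hb0, mul_zero, add_zero]
      rw [Real.norm_of_nonneg (by positivity), ← div_eq_inv_mul, le_div_iff₀ hLp]; exact hz
    simp only
    rw [this, div_self hz'.ne', one_smul]
  · intro z hz
    simp only
    rw [hz, hkρ, zero_div, zero_smul]
end

section
open Set Metric Filter Topology

lemma D_lin {U : Set ℂ} (hU : IsOpen U) {φ ψ : ℂ → ℂ} (h1 : DifferentiableOn ℂ φ (ball 0 1)) (h2 : DifferentiableOn ℂ ψ U)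
    (h3 : MapsTo φ (ball 0 1) U) (h4 : MapsTo ψ U (ball 0 1)) (h5 : ∀ z ∈ ball 0 1, ψ (φ z) = z)
    (h6 : ∀ x ∈ U, φ (ψ x) = x) (h7 : φ 0 = 0) :
    ∃ α : ℂ, α ≠ 0 ∧ ∃ f g : ℂ → ℂ, DD (ball 0 1 \ {0}) (U \ {0}) f g ∧ ∃ δ > 0, ∀ z, ‖z‖ < δ → f z = α * z := by
  have hb0 : (0:ℂ) ∈ ball (0:ℂ) 1 := by simp
  have hU0 : (0:ℂ) ∈ U := by have := h3 hb0; rwa [h7] at this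
  have hψ0 : ψ 0 = 0 := by have := h5 0 hb0; rwa [h7] at this
  have hφd : HasDerivAt φ (deriv φ 0) 0 := (h1.differentiableAt (isOpen_ball.mem_nhds hb0)).hasDerivAt
  have hψd : HasDerivAt ψ (deriv ψ 0) 0 := (h2.differentiableAt (hU.mem_nhds hU0)).hasDerivAt
  have hprod : deriv ψ 0 * deriv φ 0 = 1 := by
    have hψd' : HasDerivAt ψ (deriv ψ 0) (φ 0) := by rw [h7]; exact hψd
    have c := hψd'.comp (0:ℂ) hφd
    have : (ψ ∘ φ) =ᶠ[𝓝 0] id := by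
      filter_upwards [isOpen_ball.mem_nhds hb0] with z hz using h5 z hz
    exact (c.congr_of_eventuallyEq this.symm).unique (hasDerivAt_id _)
  set α := deriv φ 0 with hα
  have hα0 : α ≠ 0 := right_ne_zero_of_mul_eq_one hprod
  have hφs : ContDiffOn ℝ (⊤:ℕ∞) φ (ball 0 1) := (h1.contDiffOn isOpen_ball).restrict_scalars ℝ
  have hψs : ContDiffOn ℝ (⊤:ℕ∞) ψ U := (h2.contDiffOn hU).restrict_scalars ℝ
  have hmul : ContDiff ℝ (⊤:ℕ∞) (fun z : ℂ => α * z) := contDiff_const.mul contDiff_id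
  have hpre : IsOpen ((fun z : ℂ => α * z) ⁻¹' U) := hU.preimage hmul.continuous
  obtain ⟨r, hr, hrU⟩ := Metric.isOpen_iff.1 hpre 0 (by simpa using hU0)
  set r₀ := min r 1 with hr₀
  have hr₀p : 0 < r₀ := lt_min hr one_pos
  have hsub : ball 0 r₀ ⊆ (fun z : ℂ => α * z) ⁻¹' U := (ball_subset_ball (min_le_left _ _)).trans hrU
  have hhs : ContDiffOn ℝ (⊤:ℕ∞) (fun z => ψ (α * z) - z) (ball 0 r₀) :=
    (hψs.comp hmul.contDiffOn hsub).sub contDiffOn_id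
  have hhd : HasDerivAt (fun z => ψ (α * z) - z) 0 0 := by
    have e1 : HasDerivAt (fun z : ℂ => α * z) α 0 := by simpa using (hasDerivAt_id (0:ℂ)).const_mul α
    have e2 : HasDerivAt ψ (deriv ψ 0) (α * 0) := by rw [mul_zero]; exact hψd
    have e3 := (e2.comp (0:ℂ) e1).sub (hasDerivAt_id (0:ℂ))
    rw [hprod, sub_self] at e3
    exact e3
  have hfd : fderiv ℝ (fun z => ψ (α * z) - z) 0 = 0 := by
    have := (hhd.hasFDerivAt.restrictScalars ℝ).fderiv
    rw [this]; ext v <;> simp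
  obtain ⟨e, δ, hδ, he, hel, hex, hez⟩ := loc_pert hr₀p hhs (by simp [hψ0]) hfd
  obtain ⟨g, hg, hg1, hg2⟩ := idLip he hel
  set H : ℂ → ℂ := fun x => x + e x with hH
  have hg1' : ∀ x, g (H x) = x := hg1
  have hHs : ContDiff ℝ (⊤:ℕ∞) H := contDiff_id.add he
  have hout : ∀ x, 1 ≤ ‖x‖ → H x = x := by
    intro x hx
    simp only [hH]
    rw [hez x ((min_le_right _ _).trans hx), add_zero]
  have hiff : ∀ x, ‖x‖ < 1 ↔ ‖H x‖ < 1 := by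
    intro x
    constructor
    · intro hx
      by_contra hc
      have e1 := hout (H x) (not_lt.1 hc)
      have e2 : H x = x := by rw [← hg1' (H x), e1, hg1']
      rw [e2] at hc; exact hc hx
    · intro hx
      by_contra hc
      rw [hout x (not_lt.1 hc)] at hx; exact hc hx
  have hH0 : H 0 = 0 := by
    simp only [hH]
    rw [hex 0 (by simpa using hδ)]
    simp [hψ0]
  have hDH : DD univ univ H g := ⟨isOpen_univ, isOpen_univ, mapsTo_univ _ _, mapsTo_univ _ _, fun x _ => hg1 x, fun y _ => hg2 y,
    hHs.contDiffOn, hg.contDiffOn⟩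
  have hD1 : DD (ball 0 1 \ {0}) (ball 0 1 \ {0}) H g := by
    have ho : IsOpen (ball (0:ℂ) 1 \ {0}) := isOpen_ball.sdiff isClosed_singleton
    refine hDH.restr (subset_univ _) (subset_univ _) ho ho fun x _ => ?_
    simp only [Set.mem_sdiff, mem_ball_zero_iff, mem_singleton_iff]
    rw [hiff x]
    refine and_congr_right fun _ => not_congr ⟨fun h => by rw [h, hH0], fun h => ?_⟩
    have h9 := hg1' 0
    rw [hH0] at h9
    rw [← hg1' x, h, h9]
  have hD2 : DD (ball 0 1 \ {0}) (U \ {0}) φ ψ := by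
    have hD : DD (ball 0 1) U φ ψ := ⟨isOpen_ball, hU, h3, h4, h5, h6, hφs, hψs⟩
    refine hD.restr sdiff_subset sdiff_subset (isOpen_ball.sdiff isClosed_singleton) (hU.sdiff isClosed_singleton) fun x hx => ?_
    simp only [Set.mem_sdiff, mem_singleton_iff]
    refine ⟨fun h => ⟨h3 hx, fun h' => h.2 ?_⟩, fun h => ⟨hx, fun h' => h.2 (by rw [h', h7])⟩⟩
    rw [← h5 x hx, h', hψ0]
  refine ⟨α, hα0, _, _, hD1.trans hD2, min δ r₀, lt_min hδ hr₀p, fun z hz => ?_⟩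
  have hz1 : ‖z‖ < δ := lt_of_lt_of_le hz (min_le_left _ _)
  have hz2 : z ∈ ball (0:ℂ) r₀ := by simpa using lt_of_lt_of_le hz (min_le_right _ _)
  simp only [Function.comp, hH]
  rw [hex z hz1]
  rw [add_sub_cancel, h6 _ (hsub hz2)]

lemma conn_fib {X Y : Type*} [TopologicalSpace X] [TopologicalSpace Y] [T2Space Y] {q : X → Y} {Q : Set X} {K : Set Y}
    (hQ : IsCompact Q) (hq : ContinuousOn q Q) (hK : IsPreconnected K) (hmap : MapsTo q Q K)
    (hfib : ∀ y ∈ K, IsPreconnected (Q ∩ q ⁻¹' {y})) (hsurj : SurjOn q Q K) : IsPreconnected Q := by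
  rw [isPreconnected_closed_iff]
  intro A B hA hB hAB hQA hQB
  by_contra hne
  rw [not_nonempty_iff_eq_empty] at hne
  have hAc : IsClosed (q '' (Q ∩ A)) := ((hQ.inter_right hA).image_of_continuousOn (hq.mono inter_subset_left)).isClosed
  have hBc : IsClosed (q '' (Q ∩ B)) := ((hQ.inter_right hB).image_of_continuousOn (hq.mono inter_subset_left)).isClosed
  obtain ⟨a, haQ, haA⟩ := hQA
  obtain ⟨b, hbQ, hbB⟩ := hQB
  obtain ⟨y, hyK, ⟨x, hx, hxy⟩, ⟨x', hx', hxy'⟩⟩ := isPreconnected_closed_iff.1 hK _ _ hAc hBc (by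
    intro y hy
    obtain ⟨x, hx, rfl⟩ := hsurj hy
    rcases hAB hx with h | h
    · exact Or.inl ⟨x, ⟨hx, h⟩, rfl⟩
    · exact Or.inr ⟨x, ⟨hx, h⟩, rfl⟩) ⟨q a, hmap haQ, a, ⟨haQ, haA⟩, rfl⟩ ⟨q b, hmap hbQ, b, ⟨hbQ, hbB⟩, rfl⟩
  obtain ⟨z, hz, hzAB⟩ := isPreconnected_closed_iff.1 (hfib y hyK) A B hA hB (inter_subset_left.trans hAB)
    ⟨x, ⟨hx.1, hxy⟩, hx.2⟩ ⟨x', ⟨hx'.1, hxy'⟩, hx'.2⟩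
  have : z ∈ Q ∩ (A ∩ B) := ⟨hz.1, hzAB⟩
  rw [hne] at this
  exact this

lemma DD_inv {S T : Set ℂ} (hS : IsOpen S) (hT : IsOpen T) (hS0 : (0:ℂ) ∉ S) (h : ∀ z, z ∈ S ↔ z⁻¹ ∈ T) :
    DD S T (fun z => z⁻¹) (fun z => z⁻¹) := by
  have hs : ContDiffOn ℝ (⊤:ℕ∞) (fun z : ℂ => z⁻¹) {0}ᶜ := fun z hz => (contDiffAt_inv ℝ hz).contDiffWithinAt
  have hT0 : (0:ℂ) ∉ T := fun h0 => hS0 ((h 0).2 (by simpa using h0))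
  refine ⟨hS, hT, fun z hz => (h z).1 hz, fun z hz => (h _).2 (by simpa using hz), fun z _ => inv_inv z, fun z _ => inv_inv z,
    hs.mono fun z hz => ?_, hs.mono fun z hz => ?_⟩
  · rintro rfl; exact hS0 hz
  · rintro rfl; exact hT0 hz

theorem D_col0 {K : Set ℂ} (hK : IsCompact K) (hKc : IsPreconnected K) (hKcc : IsPreconnected Kᶜ) (h0 : (0:ℂ) ∈ K) :
    ∃ f g : ℂ → ℂ, DD {0}ᶜ Kᶜ f g ∧ ∃ R > 0, ∀ z, R ≤ ‖z‖ → f z = z := by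
  obtain ⟨f1, g1, hN, ⟨R1, hR1, hf1⟩, hg1c, hg10⟩ := D_N one_pos
  have hg1far : ∀ z, R1 ≤ ‖z‖ → g1 z = z := by
    intro z hz
    have hz0 : z ≠ 0 := by rintro rfl; simp at hz; linarith
    have := hN.2.2.2.2.1 z hz0
    rwa [hf1 z hz] at this
  set V : Set ℂ := (closedBall 0 1)ᶜ ∩ g1 ⁻¹' Kᶜ with hV
  have hVo : IsOpen V := hN.2.2.2.2.2.2.2.continuousOn.isOpen_inter_preimage isClosed_closedBall.isOpen_compl hK.isClosed.isOpen_compl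
  have hK0 : Kᶜ ⊆ {0}ᶜ := fun z hz h => hz (by rw [mem_singleton_iff.1 h]; exact h0)
  have hDV : DD V Kᶜ g1 f1 := by
    refine hN.symm.restr inter_subset_left hK0 hVo hK.isClosed.isOpen_compl fun x hx => ?_
    exact ⟨fun h => h.2, fun h => ⟨hx, h⟩⟩
  have hVpre : IsPreconnected V := by
    have : V = f1 '' Kᶜ := by
      ext z; constructor
      · intro hz; exact ⟨g1 z, hz.2, hN.2.2.2.2.2.1 z hz.1⟩
      · rintro ⟨x, hx, rfl⟩; exact hDV.2.2.2.1 hx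
    rw [this]
    exact hKcc.image _ (hN.2.2.2.2.2.2.1.continuousOn.mono hK0)
  obtain ⟨M, hM⟩ := hK.isBounded.subset_closedBall (0:ℂ)
  set R := max (max R1 M) 1 with hR
  have hRp : 0 < R := lt_of_lt_of_le one_pos (le_max_right _ _)
  have hVfar : ∀ z, R < ‖z‖ → z ∈ V := by
    intro z hz
    have a1 : R1 < ‖z‖ := lt_of_le_of_lt ((le_max_left _ _).trans (le_max_left _ _)) hz
    have a2 : M < ‖z‖ := lt_of_le_of_lt ((le_max_right _ _).trans (le_max_left _ _)) hz
    have a3 : 1 < ‖z‖ := lt_of_le_of_lt (le_max_right _ _) hz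
    refine ⟨by simpa using a3, ?_⟩
    rw [mem_preimage, hg1far z a1.le]
    intro hzK
    have := hM hzK
    simp at this; linarith
  have hV0 : (0:ℂ) ∉ V := fun h => h.1 (by simp)
  set W : Set ℂ := {0}ᶜ ∩ (fun z => z⁻¹) ⁻¹' V with hW
  have hinvc : ContinuousOn (fun z : ℂ => z⁻¹) {0}ᶜ := continuousOn_inv₀
  have hWo : IsOpen W := hinvc.isOpen_inter_preimage isOpen_compl_singleton hVo
  have hWV : W = (fun z => z⁻¹) '' V := by
    ext z; constructor
    · intro hz; exact ⟨z⁻¹, hz.2, inv_inv z⟩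
    · rintro ⟨x, hx, rfl⟩
      refine ⟨?_, by simpa using hx⟩
      simp only [mem_compl_iff, mem_singleton_iff, inv_eq_zero]
      rintro rfl; exact hV0 hx
  have hnear : ∀ z : ℂ, z ≠ 0 → ‖z‖ < R⁻¹ → z ∈ W := by
    intro z hz hz'
    refine ⟨hz, hVfar _ ?_⟩
    rw [norm_inv]
    exact (lt_inv_comm₀ hRp (norm_pos_iff.2 hz)).2 hz'
  set U : Set ℂ := insert 0 W with hU
  have hUo : IsOpen U := by
    have : U = ball 0 R⁻¹ ∪ W := by
      ext z; constructor
      · rintro (rfl | h)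
        · left; simpa using hRp
        · right; exact h
      · rintro (h | h)
        · by_cases hz : z = 0
          · left; exact hz
          · right; exact hnear z hz (by simpa using h)
        · right; exact h
    rw [this]; exact isOpen_ball.union hWo
  have hUb : U ⊆ ball 0 1 := by
    rintro z (rfl | h)
    · simp
    · have h1 : 1 < ‖z⁻¹‖ := by simpa using h.2.1
      rw [norm_inv] at h1
      have : 0 < ‖z‖ := norm_pos_iff.2 h.1
      rw [mem_ball_zero_iff]
      exact (one_lt_inv₀ this).1 h1
  have hUpre : IsPreconnected U := by
    have hWpre : IsPreconnected W := by
      rw [hWV]; exact hVpre.image _ (hinvc.mono fun z hz h => hV0 (by rw [← mem_singleton_iff.1 h]; exact hz))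
    refine hWpre.subset_closure (subset_insert _ _) (insert_subset ?_ subset_closure)
    rw [Metric.mem_closure_iff]
    intro ε hε
    have hm : 0 < min ε R⁻¹ := lt_min hε (inv_pos.2 hRp)
    refine ⟨((min ε R⁻¹ / 2 : ℝ) : ℂ), hnear _ ?_ ?_, ?_⟩
    · exact_mod_cast (half_pos hm).ne'
    · rw [Complex.norm_real, Real.norm_of_nonneg (half_pos hm).le]
      exact lt_of_lt_of_le (half_lt_self hm) (min_le_right _ _)
    · rw [dist_comm, dist_zero_right, Complex.norm_real, Real.norm_of_nonneg (half_pos hm).le]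
      exact lt_of_lt_of_le (half_lt_self hm) (min_le_left _ _)
  have hcompl : IsPreconnected (closedBall 0 1 \ U) := by
    have hmem : ∀ z ∈ closedBall 0 1 \ U, z ≠ 0 ∧ 1 ≤ ‖z⁻¹‖ ∧ g1 z⁻¹ ∈ K := by
      rintro z ⟨hz1, hz2⟩
      have hz0 : z ≠ 0 := fun h => hz2 (Or.inl h)
      have hzn : 1 ≤ ‖z⁻¹‖ := by
        rw [norm_inv]; exact (one_le_inv₀ (norm_pos_iff.2 hz0)).2 (by simpa using hz1)
      refine ⟨hz0, hzn, ?_⟩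
      rcases hzn.eq_or_lt with h | h
      · rw [hg10 _ h.symm]; exact h0
      · by_contra hc
        exact hz2 (Or.inr ⟨hz0, by simpa using h, hc⟩)
    have hmem' : ∀ z : ℂ, 1 ≤ ‖z‖ → g1 z ∈ K → z⁻¹ ∈ closedBall 0 1 \ U := by
      intro z hz hzK
      have hz0 : z ≠ 0 := by rintro rfl; simp at hz; linarith
      refine ⟨?_, ?_⟩
      · rw [mem_closedBall, dist_zero_right, norm_inv]; exact inv_le_one_of_one_le₀ hz
      · rintro (h | h)
        · exact hz0 (inv_eq_zero.1 h)
        · have := h.2.2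
          simp only [mem_preimage, inv_inv] at this
          exact this hzK
    have hc : ContinuousOn (fun z : ℂ => g1 z⁻¹) (closedBall 0 1 \ U) := by
      refine hg1c.comp (hinvc.mono fun z hz => (hmem z hz).1) fun z hz => ?_
      simpa using (hmem z hz).1
    refine conn_fib (q := fun z => g1 z⁻¹) ((isCompact_closedBall _ _).diff hUo) hc hKc (fun z hz => (hmem z hz).2.2) ?_ ?_
    · intro y hy
      by_cases hy0 : y = 0
      · have : closedBall 0 1 \ U ∩ (fun z : ℂ => g1 z⁻¹) ⁻¹' {y} = sphere 0 1 := by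
          ext z; constructor
          · rintro ⟨hz, hzy⟩
            obtain ⟨b1, b2, b3⟩ := hmem z hz
            have : ‖z⁻¹‖ = 1 := by
              by_contra hne
              have hz' : z⁻¹ ∈ (closedBall (0:ℂ) 1)ᶜ := by simpa using lt_of_le_of_ne b2 (Ne.symm hne)
              have := hN.2.2.2.1 hz'
              rw [mem_preimage, mem_singleton_iff, hy0] at hzy
              exact this hzy
            rw [norm_inv, inv_eq_one] at this
            simpa using this
          · intro hz
            have hz1 : ‖z‖ = 1 := by simpa using hz
            have hz2 : ‖z⁻¹‖ = 1 := by rw [norm_inv, hz1, inv_one]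
            have hz3 := hg10 _ hz2
            refine ⟨?_, by rw [mem_preimage, mem_singleton_iff, hy0]; exact hz3⟩
            have := hmem' z⁻¹ hz2.ge (by rw [hz3]; exact h0)
            rwa [inv_inv] at this
        rw [this]
        exact isPreconnected_sphere (by rw [Complex.rank_real_complex]; norm_num) _ _
      · apply Set.Subsingleton.isPreconnected
        rintro z ⟨hz, hzy⟩ w ⟨hw, hwy⟩
        have key : ∀ z ∈ closedBall 0 1 \ U, g1 z⁻¹ = y → z⁻¹ = f1 y := by
          intro z hz hzy
          obtain ⟨b1, b2, b3⟩ := hmem z hz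
          have hz' : z⁻¹ ∈ (closedBall (0:ℂ) 1)ᶜ := by
            simp only [mem_compl_iff, mem_closedBall, dist_zero_right, not_le]
            refine lt_of_le_of_ne b2 fun h => hy0 ?_
            rw [← hzy, hg10 _ h.symm]
          rw [← hzy, hN.2.2.2.2.2.1 _ hz']
        exact inv_injective ((key z hz hzy).trans (key w hw hwy).symm)
    · intro y hy
      by_cases hy0 : y = 0
      · refine ⟨1⁻¹, hmem' 1 (by simp) ?_, ?_⟩
        · rw [hg10 _ (by simp)]; exact h0
        · simp only [inv_inv]; rw [hg10 _ (by simp), hy0]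
      · have e1 := hN.2.2.2.2.1 y hy0
        have e2 : 1 < ‖f1 y‖ := by simpa using hN.2.2.1 (show y ∈ ({0}:Set ℂ)ᶜ from hy0)
        refine ⟨(f1 y)⁻¹, hmem' _ e2.le (by rw [e1]; exact hy), ?_⟩
        simp only [inv_inv]; exact e1
  have hGd : Gd U := ⟨hUo, hUb, hUpre, hcompl⟩
  obtain ⟨φ, ψ, r1, r2, r3, r4, r5, r6, r7⟩ := RMT0 hGd (Or.inl rfl)
  obtain ⟨α, hα, f2, g2, hD2, δ, hδ, hf2⟩ := D_lin hUo r1 r2 r3 r4 r5 r6 r7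
  have hαp : 0 < ‖α‖ := norm_pos_iff.2 hα
  obtain ⟨f3, g3, hN3, ⟨R3, hR3, hf3⟩, -, -⟩ := D_N (inv_pos.2 hαp)
  have hDα : DD (closedBall 0 ‖α‖⁻¹)ᶜ (closedBall 0 1)ᶜ (fun z => α * z) (fun z => α⁻¹ * z) := by
    refine ⟨isClosed_closedBall.isOpen_compl, isClosed_closedBall.isOpen_compl, ?_, ?_, ?_, ?_, ?_, ?_⟩
    · intro z hz
      simp only [mem_compl_iff, mem_closedBall, dist_zero_right, not_le] at hz ⊢
      rw [norm_mul]
      rwa [inv_lt_iff_one_lt_mul₀' hαp] at hz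
    · intro z hz
      simp only [mem_compl_iff, mem_closedBall, dist_zero_right, not_le] at hz ⊢
      rw [norm_mul, norm_inv]
      exact lt_mul_of_one_lt_right (inv_pos.2 hαp) hz
    · intro z _; field_simp
    · intro z _; field_simp
    · exact (contDiff_const.mul contDiff_id).contDiffOn
    · exact (contDiff_const.mul contDiff_id).contDiffOn
  have hDi1 : DD (closedBall 0 1)ᶜ (ball 0 1 \ {0}) (fun z => z⁻¹) (fun z => z⁻¹) := by
    refine DD_inv isClosed_closedBall.isOpen_compl (isOpen_ball.sdiff isClosed_singleton) (by simp) fun z => ?_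
    simp only [mem_compl_iff, mem_closedBall, dist_zero_right, not_le, Set.mem_sdiff, mem_ball_zero_iff, mem_singleton_iff, inv_eq_zero, norm_inv]
    constructor
    · intro h
      exact ⟨inv_lt_one_of_one_lt₀ h, by rintro rfl; simp at h; linarith⟩
    · rintro ⟨h, h'⟩
      exact (inv_lt_one₀ (norm_pos_iff.2 h')).1 h
  have hUW : U \ {0} = W := by
    ext z; constructor
    · rintro ⟨h | h, h'⟩
      · exact absurd h h'
      · exact h
    · intro h; exact ⟨Or.inr h, h.1⟩
  rw [hUW] at hD2
  have hDi2 : DD W V (fun z => z⁻¹) (fun z => z⁻¹) := by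
    refine DD_inv hWo hVo (fun h => h.1 rfl) fun z => ⟨fun h => h.2, fun h => ⟨?_, h⟩⟩
    rintro rfl
    simp only [inv_zero] at h
    exact hV0 h
  refine ⟨_, _, ((((hN3.trans hDα).trans hDi1).trans hD2).trans hDi2).trans hDV, max (max R3 R1) (2 * (‖α‖ * δ)⁻¹), ?_, fun z hz => ?_⟩
  · exact lt_of_lt_of_le hR3 ((le_max_left _ _).trans (le_max_left _ _))
  · have a1 : R3 ≤ ‖z‖ := ((le_max_left _ _).trans (le_max_left _ _)).trans hz
    have a2 : R1 ≤ ‖z‖ := ((le_max_right _ _).trans (le_max_left _ _)).trans hz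
    have a3 : 2 * (‖α‖ * δ)⁻¹ ≤ ‖z‖ := (le_max_right _ _).trans hz
    have hzp : 0 < ‖z‖ := lt_of_lt_of_le hR3 a1
    have hz0 : z ≠ 0 := norm_pos_iff.1 hzp
    simp only [Function.comp]
    have e9 : (α * (α * z)⁻¹)⁻¹ = z := by field_simp
    rw [hf3 z a1, hf2, e9, hg1far z a2]
    rw [norm_inv, norm_mul]
    rw [inv_lt_comm₀ (by positivity) hδ]
    have : (‖α‖ * δ)⁻¹ < ‖z‖ := by
      have : 0 < (‖α‖ * δ)⁻¹ := by positivity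
      linarith
    rw [mul_inv] at this
    calc δ⁻¹ = ‖α‖ * (‖α‖⁻¹ * δ⁻¹) := by field_simp
      _ < ‖α‖ * ‖z‖ := by gcongr

lemma DD_tr {S T : Set ℂ} (hS : IsOpen S) (hT : IsOpen T) (c : ℂ) (h : ∀ z, z ∈ S ↔ z + c ∈ T) :
    DD S T (fun z => z + c) (fun z => z - c) := by
  refine ⟨hS, hT, fun z hz => (h z).1 hz, fun z hz => (h _).2 (by simpa using hz), fun z _ => add_sub_cancel_right z c,
    fun z _ => sub_add_cancel z c, (contDiff_id.add contDiff_const).contDiffOn, (contDiff_id.sub contDiff_const).contDiffOn⟩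

theorem D_col {K : Set ℂ} (hK : IsCompact K) (hKc : IsPreconnected K) (hKcc : IsPreconnected Kᶜ) {a : ℂ} (ha : a ∈ K) :
    ∃ f g : ℂ → ℂ, DD {a}ᶜ Kᶜ f g ∧ ∃ R : ℝ, ∀ z, R ≤ ‖z‖ → f z = z := by
  set K0 : Set ℂ := (fun z => z - a) '' K with hK0
  have hm : ∀ z, z ∈ K0 ↔ z + a ∈ K := by
    intro z; constructor
    · rintro ⟨x, hx, rfl⟩; simpa using hx
    · intro h; exact ⟨z + a, h, by simp⟩
  have hcont : Continuous fun z : ℂ => z - a := by fun_prop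
  have c1 : IsCompact K0 := hK.image hcont
  have c2 : IsPreconnected K0 := hKc.image _ hcont.continuousOn
  have c3 : IsPreconnected K0ᶜ := by
    have : K0ᶜ = (fun z => z - a) '' Kᶜ := by
      ext z; constructor
      · intro h; exact ⟨z + a, fun h' => h ((hm z).2 h'), by simp⟩
      · rintro ⟨x, hx, rfl⟩ h
        rw [hm] at h
        exact hx (by simpa using h)
    rw [this]; exact hKcc.image _ hcont.continuousOn
  obtain ⟨f, g, hfg, R, hR, hf⟩ := D_col0 c1 c2 c3 ((hm 0).2 (by simpa using ha))
  have d1 : DD {a}ᶜ {0}ᶜ (fun z => z + -a) (fun z => z - -a) :=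
    DD_tr isOpen_compl_singleton isOpen_compl_singleton _ fun z => by simp [← sub_eq_add_neg, sub_eq_zero]
  have d2 : DD K0ᶜ Kᶜ (fun z => z + a) (fun z => z - a) :=
    DD_tr c1.isClosed.isOpen_compl hK.isClosed.isOpen_compl _ fun z => not_congr (hm z)
  refine ⟨_, _, (d1.trans hfg).trans d2, R + ‖a‖, fun z hz => ?_⟩
  simp only [Function.comp]
  rw [hf, neg_add_cancel_right]
  have := norm_sub_norm_le z a
  rw [← sub_eq_add_neg]; linarith
end

section
open Set Metric Filter Topology

lemma E_outconn (ρ : ℝ) (hρ : 0 < ρ) : IsPreconnected (closedBall (0:ℂ) ρ)ᶜ := by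
  have h1 : (closedBall (0:ℂ) ρ)ᶜ = (fun p : ℝ × ℂ => (p.1 : ℂ) * p.2) '' (Ioi ρ ×ˢ sphere (0:ℂ) 1) := by
    ext z
    simp only [mem_compl_iff, mem_closedBall, dist_zero_right, not_le, mem_image, mem_prod, mem_Ioi, mem_sphere_iff_norm, sub_zero, Prod.exists]
    constructor
    · intro h
      have h0 : (‖z‖ : ℂ) ≠ 0 := by
        have : ‖z‖ ≠ 0 := by linarith
        exact_mod_cast this
      refine ⟨‖z‖, z / ‖z‖, ⟨h, ?_⟩, ?_⟩
      · rw [norm_div, Complex.norm_real, norm_norm]; exact div_self (hρ.trans h).ne'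
      · field_simp
    · rintro ⟨t, w, ⟨h2, h3⟩, rfl⟩
      rw [norm_mul, h3, mul_one, Complex.norm_real, Real.norm_eq_abs, abs_of_pos (hρ.trans h2)]
      exact h2
  rw [h1]
  refine IsPreconnected.image (isPreconnected_Ioi.prod (isPreconnected_sphere (by rw [Complex.rank_real_complex]; norm_num) _ _)) _ ?_
  fun_prop

lemma E_fill {K : Set ℂ} (hK : IsCompact K) (hc : IsPreconnected K) (hne : K.Nonempty) :
    ∃ W : Set ℂ, IsOpen W ∧ IsPreconnected W ∧ IsCompact Wᶜ ∧ IsPreconnected Wᶜ ∧ W ⊆ Kᶜ ∧ closure W ⊆ W ∪ K ∧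
      ∀ C : Set ℂ, IsPreconnected C → C ⊆ Kᶜ → C ⊆ W ∨ C ⊆ Wᶜ := by
  obtain ⟨ρ, hρ, hb⟩ := hK.isBounded.subset_closedBall_lt 0 0
  set p : ℂ := ((ρ + 1 : ℝ) : ℂ) with hp
  have hpn : ‖p‖ = ρ + 1 := by rw [hp, Complex.norm_real, Real.norm_eq_abs, abs_of_pos (by linarith)]
  have hpb : p ∈ (closedBall (0:ℂ) ρ)ᶜ := by simp [hpn]
  have hKo : IsOpen Kᶜ := hK.isClosed.isOpen_compl
  set W := connectedComponentIn Kᶜ p with hW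
  have hWo : IsOpen W := hKo.connectedComponentIn
  have hWc : IsPreconnected W := isPreconnected_connectedComponentIn
  have hWK : W ⊆ Kᶜ := connectedComponentIn_subset _ _
  have hout : (closedBall (0:ℂ) ρ)ᶜ ⊆ W :=
    (E_outconn ρ hρ).subset_connectedComponentIn hpb (compl_subset_compl.2 hb)
  have key : ∀ C : Set ℂ, IsPreconnected C → C ⊆ Kᶜ → (C ∩ W).Nonempty → C ⊆ W := by
    rintro C h1 h2 ⟨q, hq, hqW⟩
    rw [hW, connectedComponentIn_eq hqW]
    exact h1.subset_connectedComponentIn hq h2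
  refine ⟨W, hWo, hWc, ?_, ?_, hWK, ?_, ?_⟩
  · refine (isCompact_closedBall (0:ℂ) ρ).of_isClosed_subset hWo.isClosed_compl ?_
    exact compl_subset_comm.1 hout
  · obtain ⟨k0, hk0⟩ := hne
    have hKW : K ⊆ Wᶜ := subset_compl_comm.1 hWK
    refine isPreconnected_of_forall k0 ?_
    intro x hx
    by_cases hxK : x ∈ K
    · exact ⟨K, hKW, hk0, hxK, hc⟩
    obtain ⟨y, hy, hxy⟩ := hK.exists_infDist_eq_dist ⟨k0, hk0⟩ x
    have hd : 0 < dist x y := dist_pos.2 (fun h => hxK (h ▸ hy))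
    have hbK : ball x (dist x y) ⊆ Kᶜ := by
      intro z hz hzK
      have := infDist_le_dist_of_mem (x := x) hzK
      rw [mem_ball, dist_comm] at hz
      linarith
    have hbW : ball x (dist x y) ⊆ Wᶜ := by
      intro z hz hzW
      exact hx (key _ (convex_ball x _).isPreconnected hbK ⟨z, hz, hzW⟩ (mem_ball_self hd))
    have hS : IsPreconnected (insert y (ball x (dist x y))) := by
      refine IsPreconnected.subset_closure (convex_ball x (dist x y)).isPreconnected (subset_insert _ _) ?_
      rw [closure_ball x hd.ne']
      refine insert_subset ?_ ball_subset_closedBall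
      rw [mem_closedBall, dist_comm]
    refine ⟨insert y (ball x (dist x y)) ∪ K, ?_, Or.inr hk0, Or.inl (Or.inr (mem_ball_self hd)), ?_⟩
    · exact union_subset (insert_subset (hKW hy) hbW) hKW
    · exact IsPreconnected.union y (mem_insert _ _) hy hS hc
  · intro x hx
    by_contra hh
    rw [mem_union, not_or] at hh
    have h3 : IsPreconnected (insert x W) :=
      IsPreconnected.subset_closure hWc (subset_insert _ _) (insert_subset hx subset_closure)
    have h4 : p ∈ W := hout hpb
    exact hh.1 (key _ h3 (insert_subset hh.2 hWK) ⟨p, Or.inr h4, h4⟩ (mem_insert _ _))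
  · intro C h1 h2
    by_cases h : (C ∩ W).Nonempty
    · exact Or.inl (key C h1 h2 h)
    · right
      intro z hz hzW
      exact h ⟨z, hz, hzW⟩

lemma E_crit {S T : Set ℂ} {f g : ℂ → ℂ} (h : DD S T f g) {F : ℂ → ℝ} (hF : Differentiable ℝ F) {x : ℂ} (hx : x ∈ S) :
    fderiv ℝ (fun z => F (f z)) x = 0 ↔ fderiv ℝ F (f x) = 0 := by
  obtain ⟨hS, hT, hf, hg, hgf, hfg, hsf, hsg⟩ := h
  have df : DifferentiableAt ℝ f x := (hsf.contDiffAt (hS.mem_nhds hx)).differentiableAt (by simp)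
  have dg : DifferentiableAt ℝ g (f x) := (hsg.contDiffAt (hT.mem_nhds (hf hx))).differentiableAt (by simp)
  have c1 : fderiv ℝ (fun z => F (f z)) x = (fderiv ℝ F (f x)).comp (fderiv ℝ f x) :=
    fderiv_comp x (hF (f x)) df
  constructor
  · intro h0
    have e : F =ᶠ[𝓝 (f x)] (fun z => F (f z)) ∘ g := by
      filter_upwards [hT.mem_nhds (hf hx)] with y hy
      simp [hfg y hy]
    have d2 : DifferentiableAt ℝ (fun z => F (f z)) (g (f x)) := by
      rw [hgf x hx]; exact (hF (f x)).comp x df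
    rw [e.fderiv_eq, fderiv_comp _ d2 dg, hgf x hx, h0]
    simp
  · intro h0
    rw [c1, h0]; simp

lemma E_step {F : ℂ → ℝ} (hF : ContDiff ℝ (⊤:ℕ∞) F) {K W Q : Set ℂ} (hK : IsPreconnected K) (hKc : ∀ x ∈ K, fderiv ℝ F x = 0)
    (hcl : closure W ⊆ W ∪ K) {a : ℂ} (ha : a ∈ K) {f g : ℂ → ℂ} (h : DD {a}ᶜ W f g) {R : ℝ} (hR : ∀ z, R ≤ ‖z‖ → f z = z)
    (hQ : IsCompact Q) (hQW : Q ⊆ W) (hcr : ∀ x ∈ W, fderiv ℝ F x = 0 → x ∈ Q) :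
    ∃ G : ℂ → ℝ, ContDiff ℝ (⊤:ℕ∞) G ∧ (∃ R' : ℝ, ∀ z, R' ≤ ‖z‖ → G z = F z) ∧
      (∀ x, x ≠ a → fderiv ℝ G x = 0 → f x ∈ Q) ∧
      (∀ x, x ≠ a → f x ∈ Q → fderiv ℝ F (f x) = 0 → fderiv ℝ G x = 0) := by
  have hcrit := fun x (hx : x ∈ ({a}ᶜ : Set ℂ)) => E_crit h (hF.differentiable (by simp)) hx
  obtain ⟨hS, hT, hf, hg, hgf, hfg, hsf, hsg⟩ := h
  set c := F a with hc
  have hFc : ∀ x ∈ K, F x = c := fun x hx => sard_const hF hK hKc x hx a ha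
  classical
  set u : ℂ → ℝ := Function.update (fun x => F (f x) - c) a 0 with hu
  have hua0 : u a = 0 := by simp [hu]
  have hux : ∀ x, x ≠ a → u x = F (f x) - c := fun x hx => by simp [hu, hx]
  have hue : ∀ x, x ≠ a → u =ᶠ[𝓝 x] fun x => F (f x) - c := by
    intro x hx
    filter_upwards [isOpen_compl_singleton.mem_nhds hx] with y hy using hux y hy
  have husm : ContDiffOn ℝ (⊤:ℕ∞) u {a}ᶜ := by
    have : ContDiffOn ℝ (⊤:ℕ∞) (fun x => F (f x) - c) {a}ᶜ := (hF.comp_contDiffOn hsf).sub contDiffOn_const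
    exact this.congr fun x hx => hux x hx
  have hufd : ∀ x, x ≠ a → fderiv ℝ u x = fderiv ℝ (fun z => F (f z)) x := by
    intro x hx
    rw [(hue x hx).fderiv_eq, fderiv_sub_const]
  have hcomp : ∀ T : Set ℂ, IsCompact T → T ⊆ W → IsCompact (g '' T) ∧ a ∉ g '' T := by
    intro T h1 h2
    refine ⟨h1.image_of_continuousOn (hsg.continuousOn.mono h2), ?_⟩
    rintro ⟨y, hy, hya⟩
    exact hg (h2 hy) hya
  have hua : ContinuousAt u a := by
    rw [Metric.continuousAt_iff']
    intro ε hε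
    set R' := max R (‖a‖ + 1) with hR'
    set T : Set ℂ := {z | z ∈ closure W ∧ ‖z‖ ≤ R' ∧ ε ≤ |F z - c|} with hTdef
    have hTc : IsCompact T := by
      refine (isCompact_closedBall (0:ℂ) R').of_isClosed_subset ?_ ?_
      · have hFcont := hF.continuous
        have i1 : IsClosed {z : ℂ | ‖z‖ ≤ R'} := isClosed_le (by fun_prop) (by fun_prop)
        have i2 : IsClosed {z : ℂ | ε ≤ |F z - c|} := isClosed_le (by fun_prop) (by fun_prop)
        exact isClosed_closure.inter (i1.inter i2)
      · intro z hz; simpa using hz.2.1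
    have hTW : T ⊆ W := by
      intro z hz
      rcases hcl hz.1 with h1 | h1
      · exact h1
      · have := hz.2.2; rw [hFc z h1] at this; simp at this; linarith
    obtain ⟨h1, h2⟩ := hcomp T hTc hTW
    filter_upwards [h1.isClosed.isOpen_compl.mem_nhds h2, ball_mem_nhds a one_pos] with x hx1 hx2
    by_cases hxa : x = a
    · rw [hxa]; simpa using hε
    rw [hux x hxa, hua0, Real.dist_eq, sub_zero]
    by_contra hcon
    apply hx1
    refine ⟨f x, ⟨subset_closure (hf hxa), ?_, not_lt.1 hcon⟩, hgf x hxa⟩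
    by_contra hfar
    push Not at hfar
    have h3 : f (f x) = f x := hR _ ((le_max_left _ _).trans hfar.le)
    have h4 : ‖a‖ + 1 < ‖f x‖ := (le_max_right _ _).trans_lt hfar
    have h5 : f x ≠ a := by intro h; rw [h] at h4; linarith
    have h6 : f x = x := by rw [← hgf (f x) h5, h3, hgf x hxa]
    rw [h6] at h4
    rw [mem_ball, dist_eq_norm] at hx2
    have := norm_le_norm_add_norm_sub' x a
    linarith
  obtain ⟨h1, h2⟩ := hcomp Q hQ hQW
  obtain ⟨r, hr, hrb⟩ := Metric.nhds_basis_closedBall.mem_iff.1 (h1.isClosed.isOpen_compl.mem_nhds h2)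
  have hdu : ∀ x ∈ closedBall a r, x ≠ a → fderiv ℝ u x ≠ 0 := by
    intro x hx hxa h0
    rw [hufd x hxa, hcrit x hxa] at h0
    exact hrb hx ⟨f x, hcr _ (hf hxa) h0, hgf x hxa⟩
  obtain ⟨G, hG, hGu, hGd⟩ := B_smooth hr husm hua hua0 (fun x hx => hdu x (ball_subset_closedBall hx))
  have hGfd : ∀ x, x ∉ closedBall a r → fderiv ℝ G x = fderiv ℝ u x := by
    intro x hx
    apply Filter.EventuallyEq.fderiv_eq
    filter_upwards [isClosed_closedBall.isOpen_compl.mem_nhds hx] with y hy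
    exact hGu y (fun h => hy (ball_subset_closedBall h))
  have hGfd' : ∀ x, x ∉ ball a r → fderiv ℝ G x = fderiv ℝ u x := by
    intro x hx
    have hxa : x ≠ a := by rintro rfl; exact hx (mem_ball_self hr)
    have hx' : x ∈ closure (closedBall a r)ᶜ := by
      rw [closure_compl, interior_closedBall a hr.ne']; exact hx
    have := mem_closure_iff_nhdsWithin_neBot.1 hx'
    have t1 : Tendsto (fderiv ℝ G) (𝓝[(closedBall a r)ᶜ] x) (𝓝 (fderiv ℝ G x)) :=
      ((hG.continuous_fderiv (by simp)).tendsto x).mono_left nhdsWithin_le_nhds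
    have t2 : Tendsto (fderiv ℝ u) (𝓝[(closedBall a r)ᶜ] x) (𝓝 (fderiv ℝ u x)) :=
      (((husm.continuousOn_fderiv_of_isOpen isOpen_compl_singleton (by simp)).continuousAt
        (isOpen_compl_singleton.mem_nhds hxa)).tendsto).mono_left nhdsWithin_le_nhds
    refine tendsto_nhds_unique_of_eventuallyEq t1 t2 ?_
    filter_upwards [self_mem_nhdsWithin] with y hy using hGfd y hy
  have hfdc : ∀ x, fderiv ℝ (fun z => G z + c) x = fderiv ℝ G x := fun x => by rw [fderiv_add_const]
  refine ⟨fun x => G x + c, hG.add contDiff_const, ⟨max R (‖a‖ + r + 1), ?_⟩, ?_, ?_⟩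
  · intro z hz
    have hz1 := (le_max_left _ _).trans hz
    have hz2 := (le_max_right _ _).trans hz
    have hza : z ∉ ball a r := by
      rw [mem_ball, dist_eq_norm]
      have := norm_le_norm_add_norm_sub' z a
      linarith
    have hza' : z ≠ a := by rintro rfl; exact hza (mem_ball_self hr)
    show G z + c = F z
    rw [hGu z hza, hux z hza', hR z hz1]; ring
  · intro x hxa h0
    rw [hfdc] at h0
    have hxb : x ∉ ball a r := fun hb => hGd x hb hxa h0
    rw [hGfd' x hxb, hufd x hxa, hcrit x hxa] at h0
    exact hcr _ (hf hxa) h0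
  · intro x hxa hxQ h0
    have hxb : x ∉ closedBall a r := fun hb => hrb hb ⟨f x, hxQ, hgf x hxa⟩
    rw [hfdc, hGfd x hxb, hufd x hxa, hcrit x hxa, h0]

theorem E_plane (k : ℕ) : ∀ (F : ℂ → ℝ) (P : Finset ℂ) (C : ℕ → Set ℂ), ContDiff ℝ (⊤:ℕ∞) F →
    (∀ i < k, IsCompact (C i) ∧ IsPreconnected (C i) ∧ ∀ x ∈ C i, fderiv ℝ F x = 0) →
    (∀ i < k, ∀ j < k, i ≠ j → Disjoint (C i) (C j)) →
    (∀ x, fderiv ℝ F x = 0 → x ∈ P ∨ ∃ i < k, x ∈ C i) →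
    ∃ (G : ℂ → ℝ) (P' : Finset ℂ), ContDiff ℝ (⊤:ℕ∞) G ∧ (∃ R : ℝ, ∀ z, R ≤ ‖z‖ → G z = F z) ∧
      (∀ x, fderiv ℝ G x = 0 → x ∈ P') ∧ P'.card ≤ P.card + k := by
  classical
  induction k with
  | zero =>
    intro F P C hF _ _ h
    exact ⟨F, P, hF, ⟨0, fun _ _ => rfl⟩, fun x hx => by simpa using h x hx, le_rfl⟩
  | succ k ih =>
    intro F P C hF hC hdis hcr
    rcases (C k).eq_empty_or_nonempty with he | hne
    · obtain ⟨G, P', h1, h2, h3, h4⟩ := ih F P C hF (fun i hi => hC i (by omega))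
        (fun i hi j hj => hdis i (by omega) j (by omega)) (by
          intro x hx
          rcases hcr x hx with h | ⟨i, hi, h⟩
          · exact Or.inl h
          · right
            refine ⟨i, ?_, h⟩
            rcases Nat.lt_succ_iff_lt_or_eq.1 hi with h' | rfl
            · exact h'
            · rw [he] at h; exact h.elim)
      exact ⟨G, P', h1, h2, h3, by omega⟩
    obtain ⟨hKc, hKp, hKd⟩ := hC k (by omega)
    obtain ⟨W, hWo, hWp, hWc, hWcp, hWK, hWcl, hWC⟩ := E_fill hKc hKp hne
    obtain ⟨a, ha⟩ := hne
    obtain ⟨f, g, hfg, R, hR⟩ := D_col hWc hWcp (by rwa [compl_compl]) (a := a) (fun h => hWK h ha)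
    rw [compl_compl] at hfg
    have hCW : ∀ i < k, IsCompact (C i ∩ W) ∧ IsPreconnected (C i ∩ W) := by
      intro i hi
      obtain ⟨q1, q2, -⟩ := hC i (by omega)
      have hd : C i ⊆ (C k)ᶜ := (hdis i (by omega) k (by omega) (by omega)).subset_compl_right
      rcases hWC (C i) q2 hd with h | h
      · rw [inter_eq_left.2 h]; exact ⟨q1, q2⟩
      · have : C i ∩ W = ∅ := by
          ext z; constructor
          · rintro ⟨h1, h2⟩; exact h h1 h2
          · exact fun h => h.elim
        rw [this]; exact ⟨isCompact_empty, isPreconnected_empty⟩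
    set P1 : Finset ℂ := P.filter (· ∈ W) with hP1
    set Q : Set ℂ := (P1 : Set ℂ) ∪ ⋃ i ∈ Iio k, (C i ∩ W) with hQ
    have hQc : IsCompact Q := by
      refine P1.finite_toSet.isCompact.union ?_
      exact (finite_Iio k).isCompact_biUnion fun i hi => (hCW i hi).1
    have hQW : Q ⊆ W := by
      rintro z (h | h)
      · exact (Finset.mem_filter.1 h).2
      · obtain ⟨i, hi, h⟩ := mem_iUnion₂.1 h
        exact h.2
    have hcQ : ∀ x ∈ W, fderiv ℝ F x = 0 → x ∈ Q := by
      intro x hx h0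
      rcases hcr x h0 with h | ⟨i, hi, h⟩
      · exact Or.inl (Finset.mem_coe.2 (Finset.mem_filter.2 ⟨h, hx⟩))
      · rcases Nat.lt_succ_iff_lt_or_eq.1 hi with h' | rfl
        · exact Or.inr (mem_iUnion₂.2 ⟨i, h', h, hx⟩)
        · exact (hWK hx h).elim
    obtain ⟨G0, hG0, ⟨R1, hR1⟩, hc1, hc2⟩ := E_step hF hKp hKd hWcl ha hfg hR hQc hQW hcQ
    obtain ⟨hS, hT, hf, hg, hgf, hfg', hsf, hsg⟩ := hfg
    obtain ⟨G, P', h1, ⟨R2, h2⟩, h3, h4⟩ := ih G0 (insert a (P1.image g)) (fun i => g '' (C i ∩ W)) hG0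
      (by
        intro i hi
        refine ⟨(hCW i hi).1.image_of_continuousOn (hsg.continuousOn.mono inter_subset_right),
          (hCW i hi).2.image _ (hsg.continuousOn.mono inter_subset_right), ?_⟩
        rintro _ ⟨y, hy, rfl⟩
        have hy' := hfg' y hy.2
        refine hc2 _ (hg hy.2) ?_ ?_
        · rw [hy']; exact Or.inr (mem_iUnion₂.2 ⟨i, hi, hy⟩)
        · rw [hy']; exact (hC i (by omega)).2.2 y hy.1)
      (by
        intro i hi j hj hij
        rw [Set.disjoint_left]
        rintro _ ⟨y, hy, rfl⟩ ⟨z, hz, hzy⟩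
        have : z = y := by rw [← hfg' z hz.2, hzy, hfg' y hy.2]
        rw [this] at hz
        exact Set.disjoint_left.1 (hdis i (by omega) j (by omega) hij) hy.1 hz.1)
      (by
        intro x h0
        by_cases hxa : x = a
        · left; simp [hxa]
        rcases hc1 x hxa h0 with h | h
        · left
          refine Finset.mem_insert_of_mem (Finset.mem_image.2 ⟨f x, h, hgf x hxa⟩)
        · right
          obtain ⟨i, hi, h⟩ := mem_iUnion₂.1 h
          exact ⟨i, hi, f x, h, hgf x hxa⟩)
    refine ⟨G, P', h1, ⟨max R1 R2, ?_⟩, h3, ?_⟩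
    · intro z hz
      rw [h2 z ((le_max_right _ _).trans hz), hR1 z ((le_max_left _ _).trans hz)]
    · have e1 := Finset.card_insert_le a (P1.image g)
      have e2 : (P1.image g).card ≤ P1.card := Finset.card_image_le
      have e3 : P1.card ≤ P.card := Finset.card_filter_le _ _
      omega
end

section
open Set Metric Filter Topology

lemma F_closed {X : Set E2} (hX : IsClosed X) {x : E2} (hx : x ∈ X) : IsClosed (connectedComponentIn X x) := by
  rw [← closure_subset_iff_isClosed]
  exact isPreconnected_connectedComponentIn.closure.subset_connectedComponentIn
    (subset_closure (mem_connectedComponentIn hx))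
    (closure_minimal (connectedComponentIn_subset _ _) hX)

lemma F_chart : ∃ (Φ : ℂ → E2) (Ψ : E2 → ℂ), ContDiff ℝ (⊤:ℕ∞) Φ ∧ ContDiffOn ℝ (⊤:ℕ∞) Ψ (ball 0 1) ∧
    (∀ z, Φ z ∈ ball (0:E2) 1) ∧ (∀ z, Ψ (Φ z) = z) ∧ ∀ x ∈ ball (0:E2) 1, Φ (Ψ x) = x := by
  let L : ℂ ≃ₗᵢ[ℝ] E2 := Complex.orthonormalBasisOneI.repr
  refine ⟨fun z => OpenPartialHomeomorph.univUnitBall (L z), fun x => L.symm (OpenPartialHomeomorph.univUnitBall.symm x), ?_, ?_, ?_, ?_, ?_⟩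
  · exact OpenPartialHomeomorph.contDiff_univUnitBall.comp L.contDiff
  · exact L.symm.contDiff.comp_contDiffOn OpenPartialHomeomorph.contDiffOn_univUnitBall_symm
  · intro z
    exact OpenPartialHomeomorph.univUnitBall.map_source (x := L z) (mem_univ _)
  · intro z
    have := OpenPartialHomeomorph.univUnitBall.left_inv (x := L z) (mem_univ _)
    simp only [this, LinearIsometryEquiv.symm_apply_apply]
  · intro x hx
    simp only [LinearIsometryEquiv.apply_symm_apply]
    exact OpenPartialHomeomorph.univUnitBall.right_inv hx

lemma F_sph (t : ℝ) : ‖sphPt t‖ = 1 := by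
  rw [EuclideanSpace.norm_eq]
  simp [sphPt, Fin.sum_univ_two]

lemma F_ext {n : ℕ} {a : Ribbon n} {f h : E2 → ℝ} (hf : IsExtension a f) (hh : ContDiff ℝ (⊤:ℕ∞) h)
    (he : ∀ x ∈ sphere (0:E2) 1, h =ᶠ[𝓝 x] f) : IsExtension a h := by
  obtain ⟨h1, h2, h3, h4⟩ := hf
  have hs : ∀ t, sphPt t ∈ sphere (0:E2) 1 := fun t => by simp [F_sph]
  have hg : ∀ t, gradient h (sphPt t) = gradient f (sphPt t) := fun t => by
    unfold gradient; rw [(he _ (hs t)).fderiv_eq]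
  refine ⟨hh, fun t => ?_, fun x hx => ?_, fun i => ?_⟩
  · rw [(he _ (hs t)).eq_of_nhds, h2]
  · rw [(he x hx).fderiv_eq]; exact h3 x hx
  · rw [hg]; exact h4 i

theorem F_main {n : ℕ} {a : Ribbon n} {f : E2 → ℝ} (hf : IsExtension a f) {m : ℕ}
    (e : {C : Set E2 | ∃ x ∈ critPts f, C = connectedComponentIn (critPts f) x} ≃ Fin m) :
    ∃ h : E2 → ℝ, IsExtension a h ∧ (critPts h).encard ≤ m := by
  classical
  obtain ⟨Φ, Ψ, hΦ, hΨ, hΦb, hΨΦ, hΦΨ⟩ := F_chart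
  have hfs := hf.1
  have hfd : Differentiable ℝ f := hfs.differentiable (by simp)
  have hΦd : Differentiable ℝ Φ := hΦ.differentiable (by simp)
  have hΨd : ∀ x ∈ ball (0:E2) 1, DifferentiableAt ℝ Ψ x := fun x hx =>
    (hΨ.contDiffAt (isOpen_ball.mem_nhds hx)).differentiableAt (by simp)
  have hXc : IsClosed (critPts f) := by
    have : critPts f = closedBall (0:E2) 1 ∩ {x | fderiv ℝ f x = 0} := by
      ext x
      constructor
      · exact fun h => ⟨ball_subset_closedBall h.1, h.2⟩
      · rintro ⟨h1, h2⟩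
        refine ⟨?_, h2⟩
        rw [mem_ball]
        refine lt_of_le_of_ne h1 fun h => ?_
        exact hf.2.2.1 x (mem_sphere.2 h) h2
    rw [this]
    exact isClosed_closedBall.inter (isClosed_eq (hfs.continuous_fderiv (by simp)) continuous_const)
  have hXb : critPts f ⊆ ball 0 1 := fun x hx => hx.1
  have hXcomp : IsCompact (critPts f) :=
    (isCompact_closedBall (0:E2) 1).of_isClosed_subset hXc (hXb.trans ball_subset_closedBall)
  set F : ℂ → ℝ := fun z => f (Φ z) with hF
  have hFs : ContDiff ℝ (⊤:ℕ∞) F := hfs.comp hΦ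
  have hFd : Differentiable ℝ F := hFs.differentiable (by simp)
  have hcr : ∀ z, fderiv ℝ F z = 0 ↔ Φ z ∈ critPts f := by
    intro z
    constructor
    · intro h0
      refine ⟨hΦb z, ?_⟩
      have ee : f =ᶠ[𝓝 (Φ z)] F ∘ Ψ := by
        filter_upwards [isOpen_ball.mem_nhds (hΦb z)] with y hy
        simp [hF, hΦΨ y hy]
      rw [ee.fderiv_eq, fderiv_comp _ (hFd _) (hΨd _ (hΦb z)), hΨΦ, h0]
      simp
    · rintro ⟨-, h0⟩
      have : fderiv ℝ F z = (fderiv ℝ f (Φ z)).comp (fderiv ℝ Φ z) := fderiv_comp z (hfd _) (hΦd z)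
      rw [this, h0]; simp
  let D : ℕ → Set E2 := fun i => if h : i < m then (e.symm ⟨i, h⟩ : Set E2) else ∅
  have hD : ∀ i (h : i < m), D i = (e.symm ⟨i, h⟩ : Set E2) := fun i h => by simp [D, h]
  have hDp : ∀ i < m, IsCompact (D i) ∧ IsPreconnected (D i) ∧ D i ⊆ critPts f := by
    intro i hi
    rw [hD i hi]
    obtain ⟨x, hx, hxe⟩ := (e.symm ⟨i, hi⟩).2
    rw [hxe]
    exact ⟨hXcomp.of_isClosed_subset (F_closed hXc hx) (connectedComponentIn_subset _ _),
      isPreconnected_connectedComponentIn, connectedComponentIn_subset _ _⟩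
  have hDd : ∀ i < m, ∀ j < m, i ≠ j → Disjoint (D i) (D j) := by
    intro i hi j hj hij
    rw [Set.disjoint_left]
    intro y hy1 hy2
    rw [hD i hi] at hy1
    rw [hD j hj] at hy2
    obtain ⟨x1, hx1, hxe1⟩ := (e.symm ⟨i, hi⟩).2
    obtain ⟨x2, hx2, hxe2⟩ := (e.symm ⟨j, hj⟩).2
    rw [hxe1] at hy1
    rw [hxe2] at hy2
    have h1 : (e.symm ⟨i, hi⟩ : Set E2) = e.symm ⟨j, hj⟩ := by
      rw [hxe1, hxe2, connectedComponentIn_eq hy1, connectedComponentIn_eq hy2]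
    have h2 := e.symm.injective (Subtype.ext h1)
    exact hij (by simpa using h2)
  have hDc : ∀ x ∈ critPts f, ∃ i < m, x ∈ D i := by
    intro x hx
    let c : {C : Set E2 | ∃ x ∈ critPts f, C = connectedComponentIn (critPts f) x} :=
      ⟨connectedComponentIn (critPts f) x, x, hx, rfl⟩
    refine ⟨e c, (e c).2, ?_⟩
    rw [hD _ (e c).2]
    simp only [Fin.eta, Equiv.symm_apply_apply]
    exact mem_connectedComponentIn hx
  have hDb : ∀ i < m, D i ⊆ ball 0 1 := fun i hi => (hDp i hi).2.2.trans hXb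
  obtain ⟨G, P, hG, ⟨R, hR⟩, hGP, hPc⟩ := E_plane m F ∅ (fun i => Ψ '' D i) hFs
    (by
      intro i hi
      obtain ⟨q1, q2, q3⟩ := hDp i hi
      refine ⟨q1.image_of_continuousOn (hΨ.continuousOn.mono (hDb i hi)), q2.image _ (hΨ.continuousOn.mono (hDb i hi)), ?_⟩
      rintro _ ⟨y, hy, rfl⟩
      rw [hcr, hΦΨ y (hDb i hi hy)]
      exact q3 hy)
    (by
      intro i hi j hj hij
      rw [Set.disjoint_left]
      rintro _ ⟨y, hy, rfl⟩ ⟨z, hz, hzy⟩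
      have : z = y := by rw [← hΦΨ z (hDb j hj hz), hzy, hΦΨ y (hDb i hi hy)]
      rw [this] at hz
      exact Set.disjoint_left.1 (hDd i hi j hj hij) hy hz)
    (by
      intro z hz
      right
      obtain ⟨i, hi, h⟩ := hDc _ ((hcr z).1 hz)
      exact ⟨i, hi, Φ z, h, hΨΦ z⟩)
  set h : E2 → ℝ := fun x => if x ∈ ball (0:E2) 1 then G (Ψ x) else f x with hh
  have hhb : ∀ x ∈ ball (0:E2) 1, h x = G (Ψ x) := fun x hx => if_pos hx
  set Z : Set E2 := Φ '' closedBall 0 R with hZ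
  have hZc : IsCompact Z := (isCompact_closedBall _ _).image hΦ.continuous
  have hZf : ∀ x, x ∉ Z → h x = f x := by
    intro x hx
    by_cases hxb : x ∈ ball (0:E2) 1
    · have hxR : R ≤ ‖Ψ x‖ := by
        by_contra hcon
        push Not at hcon
        exact hx ⟨Ψ x, by simpa using hcon.le, hΦΨ x hxb⟩
      rw [hhb x hxb, hR _ hxR]
      simp only [hF, hΦΨ x hxb]
    · exact if_neg hxb
  have hZe : ∀ x, x ∉ Z → h =ᶠ[𝓝 x] f := by
    intro x hx
    filter_upwards [hZc.isClosed.isOpen_compl.mem_nhds hx] with y hy using hZf y hy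
  have hZb : Z ⊆ ball 0 1 := by
    rintro _ ⟨z, -, rfl⟩; exact hΦb z
  have hhs : ContDiff ℝ (⊤:ℕ∞) h := by
    rw [contDiff_iff_contDiffAt]
    intro x
    by_cases hx : x ∈ Z
    · have hxb := hZb hx
      have : h =ᶠ[𝓝 x] fun y => G (Ψ y) := by
        filter_upwards [isOpen_ball.mem_nhds hxb] with y hy using hhb y hy
      refine ContDiffAt.congr_of_eventuallyEq ?_ this
      exact hG.contDiffAt.comp x (hΨ.contDiffAt (isOpen_ball.mem_nhds hxb))
    · exact hfs.contDiffAt.congr_of_eventuallyEq (hZe x hx)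
  refine ⟨h, F_ext hf hhs fun x hx => hZe x fun hxZ => ?_, ?_⟩
  · have h1 := hZb hxZ
    rw [mem_ball] at h1
    rw [mem_sphere] at hx
    linarith
  · have hsub : critPts h ⊆ Φ '' (P : Set ℂ) := by
      rintro x ⟨hxb, h0⟩
      refine ⟨Ψ x, ?_, hΦΨ x hxb⟩
      refine hGP _ ?_
      have hGh : G = h ∘ Φ := by
        ext z
        simp [hhb _ (hΦb z), hΨΦ]
      rw [hGh, fderiv_comp _ (hhs.differentiable (by simp) _) (hΦd _), hΦΨ x hxb, h0]
      simp
    calc (critPts h).encard ≤ (Φ '' (P : Set ℂ)).encard := encard_le_encard hsub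
      _ ≤ (P : Set ℂ).encard := encard_image_le _ _
      _ = (P.card : ℕ∞) := encard_coe_eq_coe_finsetCard P
      _ ≤ m := by
        have : P.card ≤ m := by simpa using hPc
        exact_mod_cast this
end

/-- For any extension `f` of a ribbon `a`, the set of connected components of the critical set
of `f` in the open unit disk has cardinality at least `γ(a)`. -/
theorem stmt_12 (n : ℕ) (a : Ribbon n) (f : E2 → ℝ) (hf : IsExtension a f) :
    gammaR a ≤
      {C : Set E2 | ∃ x ∈ critPts f, C = connectedComponentIn (critPts f) x}.encard := by

  by_cases hfin : {C : Set E2 | ∃ x ∈ critPts f, C = connectedComponentIn (critPts f) x}.Finite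
  · have := hfin.to_subtype
    obtain ⟨m, ⟨e⟩⟩ := Finite.exists_equiv_fin {C : Set E2 | ∃ x ∈ critPts f, C = connectedComponentIn (critPts f) x}
    obtain ⟨h, h1, h2⟩ := F_main hf e
    have hm : {C : Set E2 | ∃ x ∈ critPts f, C = connectedComponentIn (critPts f) x}.encard = m := by
      rw [Set.encard_congr (e.trans (Equiv.Set.univ (Fin m)).symm)]
      simp
    rw [hm]
    refine le_trans (sInf_le ?_) h2
    exact ⟨h, h1, rfl⟩
  · have hi : Set.Infinite {C : Set E2 | ∃ x ∈ critPts f, C = connectedComponentIn (critPts f) x} := hfin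
    rw [hi.encard_eq]
    exact le_top
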